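/- With the setup below for a translation invariant linear equation L in s = 3 variables: let ε_1, ε_2 > 0 be real numbers, let Spec_{ε_1}(f_{A'}) = {t ∈ ℤ/Pℤ : |f̂_{A'}(t)| > ε_1} and S = ⋃_{i=1}^3 c_i c_1^{−1}·Spec_{ε_1}(f_{A'}). There exist a constant C > 0 and a threshold N_1, depending only on F, L and c_0, such that if N ≥ N_1 and B ⊆ ℤ/Pℤ satisfies |f̂_B(t) − 1| ≤ ε_2 for every t ∈ S, then |Λ_L(f_{A'}) − Λ_L(f_{A'} * f_B)| ≤ C·(ε_2 + ε_1^{1/2})·δ^{−6}·P^{2}. -/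

import Mathlib

/-- The primorial of a real number `z`: the product of all primes `p ≤ z`. -/
noncomputable def primor (z : ℝ) : ℕ :=
  ∏ p ∈ (Finset.range (⌊z⌋₊ + 1)).filter Nat.Prime, p

/-- `S_F(N, z)`: the set of natural numbers `n ≤ N` with `gcd(F(n), P(z)) = 1`. -/
noncomputable def SFset (F : ℤ → ℤ) (N : ℕ) (z : ℝ) : Finset ℕ :=
  (Finset.Icc 1 N).filter (fun n => Int.gcd (F n) (primor z) = 1)

/-- `A_b = {n : b + nM ∈ A}` (automatically contained in `[0, N]`). -/
def Abset (A : Finset ℕ) (N M b : ℕ) : Finset ℕ :=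
  (Finset.range (N + 1)).filter (fun n => b + n * M ∈ A)

/-- `f_C = d(C)⁻¹ · 1_C`, where `d(C) = |C|/P`. -/
noncomputable def fCfun {P : ℕ} (C : Finset (ZMod P)) : ZMod P → ℝ :=
  fun n => ((P : ℝ) / (C.card : ℝ)) * (if n ∈ C then 1 else 0)

/-- Convolution `(f*g)(n) = P⁻¹ ∑_y f(n−y) g(y)` on `ℤ/Pℤ`. -/
noncomputable def convP {P : ℕ} [Fact P.Prime] (f g : ZMod P → ℝ) : ZMod P → ℝ :=
  fun n => (1 / (P : ℝ)) * ∑ y : ZMod P, f (n - y) * g y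

/-- `Λ_L(f) = ∑_{c₁n₁+⋯+cₛnₛ=0} ∏ f(nᵢ)`. -/
noncomputable def LamL {P : ℕ} [Fact P.Prime] {s : ℕ} (cc : Fin s → ℤ)
    (f : ZMod P → ℝ) : ℝ :=
  ∑ n ∈ Finset.univ.filter
      (fun n : Fin s → ZMod P => ∑ i, (cc i : ZMod P) * n i = 0),
    ∏ i, f (n i)

/-- The Fourier transform `f̂(t) = P⁻¹ ∑_y f(y) e^{2πity/P}`. -/
noncomputable def FTP {P : ℕ} [Fact P.Prime] (f : ZMod P → ℝ) : ZMod P → ℂ :=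
  fun t => (1 / (P : ℂ)) * ∑ y : ZMod P, (f y : ℂ) *
    Complex.exp (2 * Real.pi * Complex.I * (t.val : ℂ) * (y.val : ℂ) / (P : ℂ))


section PartA

open Finset

/-- The additive exponential `e(x) = exp(2 π i x)`. -/
noncomputable def ee (x : ℝ) : ℂ := Complex.exp (2 * Real.pi * x * Complex.I)

lemma ee_add (x y : ℝ) : ee (x + y) = ee x * ee y := by
  unfold ee; rw [← Complex.exp_add]; congr 1; push_cast; ring

lemma ee_int (n : ℤ) : ee n = 1 := by
  unfold ee
  rw [Complex.exp_eq_one_iff]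
  exact ⟨n, by push_cast; ring⟩

lemma ee_add_int (x : ℝ) (n : ℤ) : ee (x + n) = ee x := by
  rw [ee_add, ee_int, mul_one]

lemma norm_ee (x : ℝ) : ‖ee x‖ = 1 := by
  unfold ee
  have : (2 * Real.pi * x * Complex.I : ℂ) = ((2 * Real.pi * x : ℝ) : ℂ) * Complex.I := by
    push_cast; ring
  rw [this, Complex.norm_exp_ofReal_mul_I]

lemma ee_zero : ee 0 = 1 := by simp [ee]

lemma conj_ee (x : ℝ) : (starRingEnd ℂ) (ee x) = ee (-x) := by
  unfold ee
  rw [← Complex.exp_conj]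
  congr 1
  simp [Complex.conj_ofNat]

lemma norm_ee_sub_one (x : ℝ) : ‖ee x - 1‖ ≤ 2 * Real.pi * |x| := by
  unfold ee
  have : (2 * Real.pi * x * Complex.I : ℂ) = Complex.I * ((2 * Real.pi * x : ℝ) : ℂ) := by
    push_cast; ring
  rw [this]
  refine (Real.norm_exp_I_mul_ofReal_sub_one_le).trans ?_
  rw [Real.norm_eq_abs, abs_mul, abs_of_pos Real.two_pi_pos]

lemma ee_eq_one_iff (x : ℝ) : ee x = 1 ↔ ∃ n : ℤ, x = n := by
  unfold ee
  rw [Complex.exp_eq_one_iff]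
  constructor
  · rintro ⟨n, hn⟩
    refine ⟨n, ?_⟩
    have h2 : (2 * Real.pi * Complex.I : ℂ) ≠ 0 := Complex.two_pi_I_ne_zero
    have : (x : ℂ) = n := by
      apply mul_right_cancel₀ h2
      rw [← hn]; ring
    exact_mod_cast this
  · rintro ⟨n, rfl⟩
    exact ⟨n, by push_cast; ring⟩

lemma ee_nat_mul (x : ℝ) (j : ℕ) : ee (x * j) = ee x ^ j := by
  unfold ee; rw [← Complex.exp_nat_mul]; congr 1; push_cast; ring

lemma ee_sum {D : ℕ} (hD : 0 < D) (n : ℤ) :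
    ∑ j ∈ range D, ee (n / D * j) = if (D : ℤ) ∣ n then (D : ℂ) else 0 := by
  have hD' : (D : ℝ) ≠ 0 := by positivity
  simp_rw [ee_nat_mul]
  split_ifs with h
  · obtain ⟨m, rfl⟩ := h
    have : ((((D : ℤ) * m : ℤ) : ℝ) / D) = (m : ℤ) := by push_cast; field_simp
    rw [this, ee_int]; simp
  · have h1 : ee ((n : ℝ) / D) ≠ 1 := by
      intro h1
      rw [ee_eq_one_iff] at h1
      obtain ⟨m, hm⟩ := h1
      apply h
      refine ⟨m, ?_⟩
      have : (n : ℝ) = D * m := by field_simp at hm; linarith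
      exact_mod_cast this
    rw [geom_sum_eq h1, ← ee_nat_mul, div_mul_cancel₀ _ hD', ee_int]; simp

lemma parseval {D : ℕ} (hD : 0 < D) (b : ℕ → ℂ) :
    ∑ j ∈ range D, ‖∑ h ∈ range D, b h * ee (h * (j / D))‖ ^ 2
      = D * ∑ h ∈ range D, ‖b h‖ ^ 2 := by
  have key : (∑ j ∈ range D, ((‖∑ h ∈ range D, b h * ee (h * (j / D))‖ ^ 2 : ℝ) : ℂ))
      = D * ∑ h ∈ range D, ((‖b h‖ ^ 2 : ℝ) : ℂ) := by
    have e1 : ∀ j ∈ range D, ((‖∑ h ∈ range D, b h * ee (h * (j / D))‖ ^ 2 : ℝ) : ℂ)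
        = ∑ h ∈ range D, ∑ h' ∈ range D, b h * (starRingEnd ℂ) (b h') *
            ee ((((h : ℤ) - h' : ℤ) : ℝ) / D * j) := by
      intro j _
      push_cast
      rw [← Complex.mul_conj', map_sum, sum_mul_sum]
      refine sum_congr rfl fun h _ => sum_congr rfl fun h' _ => ?_
      rw [map_mul, conj_ee]
      have : ee (((h : ℝ) - h') / D * j) = ee (h * (j / D)) * ee (-(h' * (j / D))) := by
        rw [← ee_add]; congr 1; ring
      push_cast
      rw [this]; ring
    rw [sum_congr rfl e1, sum_comm, mul_sum]
    refine sum_congr rfl fun h hh => ?_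
    rw [sum_comm]
    simp_rw [← mul_sum, ee_sum hD]
    rw [sum_eq_single h]
    · simp only [sub_self, dvd_zero, if_true]
      rw [Complex.mul_conj']; push_cast; ring
    · intro h' hh' hne
      rw [if_neg, mul_zero]
      intro hd
      apply hne
      have := Int.eq_zero_of_abs_lt_dvd hd (by
        rw [mem_range] at hh hh'
        rw [abs_lt]; constructor <;> omega)
      omega
    · intro h; exact absurd hh h
  exact_mod_cast key

lemma large_sieve {ι : Type*} {P J : ℕ} (hP : 0 < P) (hJ : 0 < J) (I : Finset ι) (u : ι → ℕ)
    (hu : ∀ r ∈ I, ∀ r' ∈ I, ∀ j < J, ∀ j' < J,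
      (u r + j) % (16 * P * J) = (u r' + j') % (16 * P * J) → r = r')
    (a : ℕ → ℂ) :
    ∑ r ∈ I, ‖∑ n ∈ range P, a n * ee (n * ((u r : ℝ) / (16 * P * J : ℕ)))‖ ^ 2
      ≤ 64 * P * ∑ n ∈ range P, ‖a n‖ ^ 2 := by
  set D := 16 * P * J with hDdef
  have hD : 0 < D := by positivity
  have hDr : (0 : ℝ) < D := by exact_mod_cast hD
  have hJr : (0 : ℝ) < J := by exact_mod_cast hJ
  have hPr : (0 : ℝ) < P := by exact_mod_cast hP
  have hDe : (D : ℝ) = 16 * P * J := by rw [hDdef]; push_cast; ring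
  set g : ℕ → ℂ := fun n => (1 / (J : ℂ)) * ∑ j ∈ range J, ee (n * (j / D)) with hg
  have hJc : (J : ℂ) ≠ 0 := by exact_mod_cast hJ.ne'
  have hg1 : ∀ n ∈ range P, (1 / 2 : ℝ) ≤ ‖g n‖ := by
    intro n hn
    have hn' : (n : ℝ) < P := by exact_mod_cast mem_range.1 hn
    have h1 : g n - 1 = (1 / (J : ℂ)) * ∑ j ∈ range J, (ee (n * (j / D)) - 1) := by
      rw [sum_sub_distrib, mul_sub]; simp [hg, hJc]
    have h2 : ‖g n - 1‖ ≤ 1 / 2 := by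
      rw [h1, norm_mul]
      have : ‖∑ j ∈ range J, (ee (n * (j / D)) - 1)‖ ≤ ∑ j ∈ range J, (1 / 2 : ℝ) := by
        refine norm_sum_le_of_le _ fun j hj => ?_
        refine (norm_ee_sub_one _).trans ?_
        have hj' : (j : ℝ) < J := by exact_mod_cast mem_range.1 hj
        have hle : (n : ℝ) * (j / D) ≤ 1 / 16 := by
          rw [hDe, ← mul_div_assoc, div_le_div_iff₀ (by positivity) (by positivity)]
          have : (n : ℝ) * j ≤ P * J := by gcongr
          linarith
        rw [abs_of_nonneg (by positivity)]
        nlinarith [Real.pi_lt_four, Real.pi_pos]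
      simp only [sum_const, card_range, nsmul_eq_mul] at this
      calc ‖(1 / (J : ℂ))‖ * ‖∑ j ∈ range J, (ee (n * (j / D)) - 1)‖
          ≤ (1 / J) * (J * (1 / 2)) := by
            gcongr
            simp
        _ = 1 / 2 := by field_simp
    have h3 : ‖(1 : ℂ)‖ ≤ ‖g n‖ + ‖g n - 1‖ := by
      have := norm_sub_le (g n) (g n - 1)
      simpa using this
    rw [norm_one] at h3
    linarith
  set b : ℕ → ℂ := fun n => if n < P then a n / g n else 0 with hb
  set T : ℕ → ℂ := fun m => ∑ n ∈ range D, b n * ee (n * ((m : ℝ) / D)) with hT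
  have hPD : P ≤ D := by rw [hDdef]; nlinarith
  have hTP : ∀ m, T m = ∑ n ∈ range P, b n * ee (n * ((m : ℝ) / D)) := by
    intro m
    symm
    apply sum_subset (range_subset_range.2 hPD)
    intro n _ hn
    simp only [mem_range, not_lt] at hn
    simp [hb, not_lt.2 hn]
  have hTmod : ∀ m, T (m % D) = T m := by
    intro m
    refine sum_congr rfl fun n _ => ?_
    congr 1
    have : (n : ℝ) * ((m : ℝ) / D) = n * (((m % D : ℕ) : ℝ) / D) + (((n * (m / D) : ℕ) : ℤ) : ℝ) := by
      have h : (m : ℝ) = (m % D : ℕ) + D * (m / D : ℕ) := by exact_mod_cast (Nat.mod_add_div m D).symm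
      have e2 : ((n * (m / D) : ℕ) : ℝ) = n * ((m / D : ℕ) : ℝ) := Nat.cast_mul _ _
      rw [h, Int.cast_natCast, e2]
      generalize ((m % D : ℕ) : ℝ) = x
      generalize ((m / D : ℕ) : ℝ) = y
      field_simp
    rw [this, ee_add_int]
  have hexp : ∀ r, ∑ n ∈ range P, a n * ee (n * ((u r : ℝ) / D))
      = (1 / (J : ℂ)) * ∑ j ∈ range J, T (u r + j) := by
    intro r
    simp_rw [hTP]
    rw [sum_comm, mul_sum]
    refine sum_congr rfl fun n hn => ?_
    have hgn : g n ≠ 0 := by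
      intro h0
      have := hg1 n hn
      rw [h0, norm_zero] at this; norm_num at this
    have hbn : b n = a n / g n := by simp [hb, mem_range.1 hn]
    have : ∀ j : ℕ, ee (n * (((u r + j : ℕ) : ℝ) / D)) = ee (n * ((u r : ℝ) / D)) * ee (n * (j / D)) := by
      intro j
      rw [← ee_add]; congr 1; push_cast; ring
    simp_rw [this, ← mul_assoc]
    rw [← mul_sum, hbn]
    have hs : ∑ j ∈ range J, ee (n * (j / D)) = J * g n := by
      simp only [hg]; field_simp
    rw [hs]; field_simp
  have hsq : ∀ r, ‖∑ n ∈ range P, a n * ee (n * ((u r : ℝ) / D))‖ ^ 2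
      ≤ (1 / J) * ∑ j ∈ range J, ‖T ((u r + j) % D)‖ ^ 2 := by
    intro r
    rw [hexp, norm_mul, mul_pow]
    simp_rw [hTmod]
    have h1 : ‖∑ j ∈ range J, T (u r + j)‖ ^ 2 ≤ J * ∑ j ∈ range J, ‖T (u r + j)‖ ^ 2 := by
      calc ‖∑ j ∈ range J, T (u r + j)‖ ^ 2 ≤ (∑ j ∈ range J, ‖T (u r + j)‖) ^ 2 := by
            gcongr; exact norm_sum_le _ _
        _ ≤ _ := by
            have := sq_sum_le_card_mul_sum_sq (s := range J) (f := fun j => ‖T (u r + j)‖)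
            simpa using this
    calc ‖(1 / (J : ℂ))‖ ^ 2 * ‖∑ j ∈ range J, T (u r + j)‖ ^ 2
        ≤ (1 / J) ^ 2 * (J * ∑ j ∈ range J, ‖T (u r + j)‖ ^ 2) := by
          gcongr
          simp
      _ = _ := by field_simp
  have hinj : ∑ r ∈ I, ∑ j ∈ range J, ‖T ((u r + j) % D)‖ ^ 2 ≤ ∑ m ∈ range D, ‖T m‖ ^ 2 := by
    rw [← sum_product']
    have hi : Set.InjOn (fun x : ι × ℕ => (u x.1 + x.2) % D) (I ×ˢ range J : Finset (ι × ℕ)) := by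
      rintro ⟨r, j⟩ hx ⟨r', j'⟩ hx' h
      simp only [coe_product, Set.mem_prod, mem_coe, mem_range] at hx hx'
      have hr := hu r hx.1 r' hx'.1 j hx.2 j' hx'.2 h
      subst hr
      have h' : (u r + j) ≡ (u r + j') [MOD D] := h
      have h'' := Nat.ModEq.add_left_cancel' _ h'
      have hJD : J ≤ D := by rw [hDdef]; nlinarith
      have : j = j' := Nat.ModEq.eq_of_lt_of_lt h'' (by omega) (by omega)
      rw [this]
    rw [← sum_image (f := fun m => ‖T m‖ ^ 2) hi]
    apply sum_le_sum_of_subset_of_nonneg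
    · intro m hm
      obtain ⟨x, _, rfl⟩ := mem_image.1 hm
      exact mem_range.2 (Nat.mod_lt _ hD)
    · intros; positivity
  have hpars := parseval hD b
  have hbs : ∑ h ∈ range D, ‖b h‖ ^ 2 ≤ 4 * ∑ n ∈ range P, ‖a n‖ ^ 2 := by
    have : ∑ h ∈ range D, ‖b h‖ ^ 2 = ∑ h ∈ range P, ‖b h‖ ^ 2 := by
      symm
      apply sum_subset (range_subset_range.2 hPD)
      intro n _ hn
      simp only [mem_range, not_lt] at hn
      simp [hb, not_lt.2 hn]
    rw [this, mul_sum]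
    refine sum_le_sum fun n hn => ?_
    have hbn : b n = a n / g n := by simp [hb, mem_range.1 hn]
    have h1 := hg1 n hn
    rw [hbn, norm_div, div_pow, div_le_iff₀ (by positivity)]
    have : (1 : ℝ) ≤ 4 * ‖g n‖ ^ 2 := by nlinarith
    nlinarith [sq_nonneg ‖a n‖]
  calc ∑ r ∈ I, ‖∑ n ∈ range P, a n * ee (n * ((u r : ℝ) / D))‖ ^ 2
      ≤ ∑ r ∈ I, (1 / J) * ∑ j ∈ range J, ‖T ((u r + j) % D)‖ ^ 2 := sum_le_sum fun r _ => hsq r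
    _ = (1 / J) * ∑ r ∈ I, ∑ j ∈ range J, ‖T ((u r + j) % D)‖ ^ 2 := by rw [mul_sum]
    _ ≤ (1 / J) * (D * (4 * ∑ n ∈ range P, ‖a n‖ ^ 2)) := by
        gcongr
        refine hinj.trans ?_
        rw [hpars]
        gcongr
    _ = 64 * P * ∑ n ∈ range P, ‖a n‖ ^ 2 := by
        rw [hDe]; field_simp; ring

end PartA

section PartB

open Finset

/-- exponential sum over a finite set of natural numbers -/
noncomputable def SS (X : Finset ℕ) (θ : ℝ) : ℂ := ∑ n ∈ X, ee (n * θ)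

/-- the fraction attached to a finitely supported family of numerators -/
noncomputable def Phi (β : ℕ →₀ ℕ) : ℝ := β.sum fun p b => (b : ℝ) / p

lemma Phi_add_single (β : ℕ →₀ ℕ) (q b : ℕ) :
    Phi (β + Finsupp.single q b) = Phi β + b / q := by
  unfold Phi
  rw [Finsupp.sum_add_index', Finsupp.sum_single_index]
  · simp
  · simp
  · intro p x y; push_cast; ring

lemma Phi_zero : Phi 0 = 0 := by simp [Phi]

lemma Phi_eq_sum {β : ℕ →₀ ℕ} {Ps : Finset ℕ} (h : β.support ⊆ Ps) :
    Phi β = ∑ p ∈ Ps, (β p : ℝ) / p := by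
  unfold Phi
  rw [Finsupp.sum_of_support_subset _ h]
  simp

lemma mont_one {p k : ℕ} (hk : k < p) (X : Finset ℕ) (hX : (X.image (· % p)).card + k ≤ p)
    (θ : ℝ) :
    (k : ℝ) / (p - k) * ‖SS X θ‖ ^ 2 ≤ ∑ b ∈ Ico 1 p, ‖SS X (θ + b / p)‖ ^ 2 := by
  have hp : 0 < p := by omega
  have hpr : (0 : ℝ) < p := by exact_mod_cast hp
  have hkp : (0 : ℝ) < p - k := by rw [sub_pos]; exact_mod_cast hk
  set Z : ℕ → ℂ := fun h => ∑ n ∈ X with n % p = h, ee (n * θ) with hZ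
  have h1 : ∀ b : ℕ, SS X (θ + b / p) = ∑ h ∈ range p, Z h * ee (h * (b / p)) := by
    intro b
    unfold SS
    rw [← sum_fiberwise_of_maps_to (s := X) (t := range p) (g := fun n => n % p)
      (fun n _ => mem_range.2 (Nat.mod_lt _ hp))]
    refine sum_congr rfl fun h _ => ?_
    rw [hZ, sum_mul]
    refine sum_congr rfl fun n hn => ?_
    have hn' := (mem_filter.1 hn).2
    rw [← ee_add]
    have : (n : ℝ) * (θ + b / p) = (n * θ + h * (b / p)) + (((n / p) * b : ℕ) : ℤ) := by
      have e : (n : ℝ) = h + p * (n / p : ℕ) := by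
        rw [← hn']; exact_mod_cast (Nat.mod_add_div n p).symm
      rw [Int.cast_natCast, Nat.cast_mul]
      have : ((n / p : ℕ) : ℝ) = ((n : ℝ) - h) / p := by rw [eq_div_iff hpr.ne']; linarith
      rw [this]; field_simp; ring
    rw [this, ee_add_int]
  have h2 := parseval hp Z
  have h3 : ∑ b ∈ range p, ‖SS X (θ + b / p)‖ ^ 2 = p * ∑ h ∈ range p, ‖Z h‖ ^ 2 := by
    rw [← h2]; refine sum_congr rfl fun b _ => ?_
    rw [h1]
  have h4 : SS X θ = ∑ h ∈ X.image (· % p), Z h := by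
    unfold SS
    rw [← sum_fiberwise_of_maps_to (s := X) (t := X.image (· % p)) (g := fun n => n % p)
      (fun n hn => mem_image_of_mem _ hn)]
  have h5 : ‖SS X θ‖ ^ 2 ≤ (p - k) * ∑ h ∈ range p, ‖Z h‖ ^ 2 := by
    rw [h4]
    calc ‖∑ h ∈ X.image (· % p), Z h‖ ^ 2 ≤ (∑ h ∈ X.image (· % p), ‖Z h‖) ^ 2 := by
          gcongr; exact norm_sum_le _ _
      _ ≤ (X.image (· % p)).card * ∑ h ∈ X.image (· % p), ‖Z h‖ ^ 2 := sq_sum_le_card_mul_sum_sq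
      _ ≤ (p - k) * ∑ h ∈ range p, ‖Z h‖ ^ 2 := by
          gcongr
          · rw [le_sub_iff_add_le]; exact_mod_cast hX
          · intro h hh
            obtain ⟨n, _, rfl⟩ := mem_image.1 hh
            exact mem_range.2 (Nat.mod_lt _ hp)
  have h6 : ∑ b ∈ range p, ‖SS X (θ + b / p)‖ ^ 2
      = ‖SS X θ‖ ^ 2 + ∑ b ∈ Ico 1 p, ‖SS X (θ + b / p)‖ ^ 2 := by
    rw [range_eq_Ico, sum_eq_sum_Ico_succ_bot hp]; simp
  have h7 : ∑ h ∈ range p, ‖Z h‖ ^ 2 ≥ ‖SS X θ‖ ^ 2 / (p - k) := by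
    rw [ge_iff_le, div_le_iff₀ hkp]; linarith
  have h8 : (k : ℝ) / (p - k) * ‖SS X θ‖ ^ 2 = p * (‖SS X θ‖ ^ 2 / (p - k)) - ‖SS X θ‖ ^ 2 := by
    field_simp; ring
  rw [h8]
  have := mul_le_mul_of_nonneg_left h7 hpr.le
  linarith

lemma sum_finsupp_insert {M : Type*} [AddCommMonoid M] (t : ℕ → Finset ℕ) {q : ℕ} {E : Finset ℕ}
    (hq : q ∉ E) (f : (ℕ →₀ ℕ) → M) :
    ∑ β ∈ (insert q E).finsupp t, f β
      = ∑ β ∈ E.finsupp t, ∑ b ∈ t q, f (β + Finsupp.single q b) := by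
  rw [← sum_product']
  symm
  refine sum_nbij' (fun x => x.1 + Finsupp.single q x.2) (fun β => (β.erase q, β q)) ?_ ?_ ?_ ?_ ?_
  · rintro ⟨β, b⟩ h
    simp only [mem_product, mem_finsupp_iff] at h ⊢
    obtain ⟨⟨h1, h2⟩, h3⟩ := h
    refine ⟨?_, ?_⟩
    · refine Finsupp.support_add.trans ?_
      apply union_subset (h1.trans (subset_insert _ _))
      refine Finsupp.support_single_subset.trans ?_
      simp
    · intro i hi
      have hq0 : β q = 0 := by
        by_contra h0
        exact hq (h1 (Finsupp.mem_support_iff.2 h0))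
      rcases mem_insert.1 hi with rfl | hi
      · simpa [hq0] using h3
      · have : q ≠ i := by rintro rfl; exact hq hi
        simpa [Finsupp.single_apply, this] using h2 i hi
  · intro β h
    simp only [mem_product, mem_finsupp_iff] at h ⊢
    obtain ⟨h1, h2⟩ := h
    refine ⟨⟨?_, ?_⟩, h2 q (mem_insert_self _ _)⟩
    · rw [Finsupp.support_erase]
      intro i hi
      rw [mem_erase] at hi
      exact (mem_insert.1 (h1 hi.2)).resolve_left hi.1
    · intro i hi
      have : i ≠ q := by rintro rfl; exact hq hi
      rw [Finsupp.erase_ne this]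
      exact h2 i (mem_insert_of_mem hi)
  · rintro ⟨β, b⟩ h
    simp only [mem_product, mem_finsupp_iff] at h ⊢
    have hq0 : β q = 0 := by
      by_contra h0
      exact hq (h.1.1 (Finsupp.mem_support_iff.2 h0))
    ext i
    · by_cases hi : i = q
      · subst hi; simp [hq0]
      · simp [Finsupp.erase_ne hi, Finsupp.single_apply, Ne.symm hi]
    · simp [hq0]
  · intro β _
    exact Finsupp.erase_add_single q β
  · intros; rfl

lemma mont_multi {k : ℕ} (X : Finset ℕ) (E : Finset ℕ) 
    (hE : ∀ p ∈ E, k < p ∧ (X.image (· % p)).card + k ≤ p) (θ : ℝ) :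
    (∏ p ∈ E, (k : ℝ) / (p - k)) * ‖SS X θ‖ ^ 2
      ≤ ∑ β ∈ E.finsupp (fun p => Ico 1 p), ‖SS X (θ + Phi β)‖ ^ 2 := by
  induction E using Finset.induction_on generalizing θ with
  | empty =>
    have h0 : (∅ : Finset ℕ).finsupp (fun p => Ico 1 p) = {0} := by
      ext β
      simp [mem_finsupp_iff]
    rw [h0]
    simp [Phi_zero]
  | insert q E hq ih =>
    rw [prod_insert hq, sum_finsupp_insert _ hq]
    have hqq := hE q (mem_insert_self _ _)
    have h1 := ih (fun p hp => hE p (mem_insert_of_mem hp)) θ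
    have hnn : (0 : ℝ) ≤ (k : ℝ) / (q - k) := by
      apply div_nonneg (by positivity)
      rw [sub_nonneg]; exact_mod_cast hqq.1.le
    rw [mul_assoc]
    refine (mul_le_mul_of_nonneg_left h1 hnn).trans ?_
    rw [mul_sum]
    refine sum_le_sum fun β _ => ?_
    simp_rw [Phi_add_single, ← add_assoc]
    exact mont_one hqq.1 X hqq.2 _

/-- index set of fractions with denominator at most `Q` -/
noncomputable def IQ (Ps : Finset ℕ) (Q : ℕ) : Finset (ℕ →₀ ℕ) :=
  (Ps.powerset.filter (fun E => ∏ p ∈ E, p ≤ Q)).biUnion (fun E => E.finsupp (fun p => Ico 1 p))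

lemma support_of_mem {E : Finset ℕ} {β : ℕ →₀ ℕ} (h : β ∈ E.finsupp (fun p => Ico 1 p)) :
    β.support = E := by
  rw [mem_finsupp_iff] at h
  apply Subset.antisymm h.1
  intro i hi
  rw [Finsupp.mem_support_iff]
  have := (mem_Ico.1 (h.2 i hi)).1
  omega

lemma mem_IQ {Ps : Finset ℕ} {Q : ℕ} {β : ℕ →₀ ℕ} (h : β ∈ IQ Ps Q) :
    β.support ⊆ Ps ∧ ∏ p ∈ β.support, p ≤ Q ∧ ∀ p ∈ β.support, β p < p := by
  unfold IQ at h
  rw [mem_biUnion] at h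
  obtain ⟨E, hE, hβ⟩ := h
  have hs := support_of_mem hβ
  rw [mem_filter, mem_powerset] at hE
  rw [hs]
  refine ⟨hE.1, hE.2, fun p hp => ?_⟩
  rw [mem_finsupp_iff] at hβ
  exact (mem_Ico.1 (hβ.2 p hp)).2

lemma main_ineq {P k Q : ℕ} (hP : 0 < P) (X : Finset ℕ) (hX : X ⊆ range P) (Ps : Finset ℕ)
    (hPs : ∀ p ∈ Ps, p.Prime ∧ k < p ∧ (X.image (· % p)).card + k ≤ p)
    (T : Finset ℕ)
    (hNC : ∀ t ∈ T, ∀ t' ∈ T, ∀ β ∈ IQ Ps Q, ∀ β' ∈ IQ Ps Q, ∀ m : ℤ,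
      |((t : ℝ) / P + Phi β) - ((t' : ℝ) / P + Phi β') - m| < 1 / (16 * P) → t = t' ∧ β = β') :
    (∑ E ∈ Ps.powerset.filter (fun E => ∏ p ∈ E, p ≤ Q), ∏ p ∈ E, (k : ℝ) / (p - k)) *
      ∑ t ∈ T, ‖SS X (t / P)‖ ^ 2 ≤ 64 * P * X.card := by
  set J := ∏ p ∈ Ps, p with hJdef
  have hJ : 0 < J := prod_pos fun p hp => (hPs p hp).1.pos
  have hJr : (0 : ℝ) < J := by exact_mod_cast hJ
  have hPr : (0 : ℝ) < P := by exact_mod_cast hP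
  set u : ℕ × (ℕ →₀ ℕ) → ℕ := fun x => 16 * J * x.1 + 16 * P * ∑ p ∈ Ps, x.2 p * (J / p) with hu
  have hux : ∀ t, ∀ β ∈ IQ Ps Q, ((u (t, β) : ℝ)) / (16 * P * J : ℕ) = (t : ℝ) / P + Phi β := by
    intro t β hβ
    rw [Phi_eq_sum (mem_IQ hβ).1]
    have : ∀ p ∈ Ps, (β p : ℝ) / p = (β p * (J / p : ℕ) : ℕ) / (J : ℝ) := by
      intro p hp
      have hd : p ∣ J := dvd_prod_of_mem _ hp
      have hp0 : (p : ℝ) ≠ 0 := by exact_mod_cast (hPs p hp).1.ne_zero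
      rw [Nat.cast_mul, Nat.cast_div hd hp0]
      field_simp
    rw [sum_congr rfl this, ← sum_div, hu]
    simp only [Nat.cast_add, Nat.cast_mul, Nat.cast_sum, Nat.cast_ofNat]
    field_simp
  have hLS := large_sieve hP hJ (T ×ˢ IQ Ps Q) u (by
    rintro ⟨t, β⟩ hr ⟨t', β'⟩ hr' j hj j' hj' h
    rw [mem_product] at hr hr'
    simp only at hr hr'
    have hD : (0 : ℝ) < (16 * P * J : ℕ) := by positivity
    have h' : (u (t, β) + j) ≡ (u (t', β') + j') [MOD 16 * P * J] := h
    have h2 := (Nat.modEq_iff_dvd.1 h'.symm)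
    obtain ⟨m, hm⟩ := h2
    have hm' : ((u (t, β) : ℝ) + j) - (u (t', β') + j') = (16 * P * J : ℕ) * m := by
      exact_mod_cast hm
    have := hNC t hr.1 t' hr'.1 β hr.2 β' hr'.2 m (by
      rw [← hux t β hr.2, ← hux t' β' hr'.2]
      have e : (u (t, β) : ℝ) / (16 * P * J : ℕ) - (u (t', β') : ℝ) / (16 * P * J : ℕ) - m
          = ((j' : ℝ) - j) / (16 * P * J : ℕ) := by
        field_simp
        linarith
      rw [e, abs_div, abs_of_pos hD, div_lt_div_iff₀ hD (by positivity)]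
      have hjj : |(j' : ℝ) - j| < J := by
        rw [abs_lt]
        have a1 : (j : ℝ) < J := by exact_mod_cast hj
        have a2 : (j' : ℝ) < J := by exact_mod_cast hj'
        have a3 : (0 : ℝ) ≤ j := by positivity
        have a4 : (0 : ℝ) ≤ j' := by positivity
        constructor <;> linarith
      push_cast
      nlinarith)
    rw [this.1, this.2]) (fun n => if n ∈ X then 1 else 0)
  have hS : ∀ θ : ℝ, ∑ n ∈ range P, (if n ∈ X then (1 : ℂ) else 0) * ee (n * θ) = SS X θ := by
    intro θ
    unfold SS
    simp only [ite_mul, one_mul, zero_mul]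
    rw [← sum_filter]
    congr 1
    ext n
    simp only [mem_filter]
    exact ⟨fun h => h.2, fun h => ⟨hX h, h⟩⟩
  have hn : ∑ n ∈ range P, ‖(if n ∈ X then (1 : ℂ) else 0)‖ ^ 2 = X.card := by
    have : ∀ n ∈ range P, ‖(if n ∈ X then (1 : ℂ) else 0)‖ ^ 2 = if n ∈ X then (1 : ℝ) else 0 := by
      intro n _; split_ifs <;> simp
    rw [sum_congr rfl this, ← sum_filter]
    have : (range P).filter (· ∈ X) = X := by
      ext n
      simp only [mem_filter]
      exact ⟨fun h => h.2, fun h => ⟨hX h, h⟩⟩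
    rw [this]; simp
  rw [hn] at hLS
  simp_rw [hS] at hLS
  refine le_trans ?_ hLS
  rw [sum_product, mul_sum]
  refine sum_le_sum fun t _ => ?_
  have e : ∑ β ∈ IQ Ps Q, ‖SS X ((u (t, β) : ℝ) / (16 * P * J : ℕ))‖ ^ 2
      = ∑ β ∈ IQ Ps Q, ‖SS X ((t : ℝ) / P + Phi β)‖ ^ 2 :=
    sum_congr rfl fun β hβ => by rw [hux t β hβ]
  rw [e]
  unfold IQ
  rw [sum_biUnion, sum_mul]
  · refine sum_le_sum fun E hE => ?_
    rw [mem_filter, mem_powerset] at hE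
    exact mont_multi X E (fun p hp => (hPs p (hE.1 hp)).2) _
  · intro E _ E' _ hne
    rw [Function.onFun, disjoint_left]
    intro β h1 h2
    exact hne ((support_of_mem h1).symm.trans (support_of_mem h2))

end PartB

section PartC

open Finset

/-- If a sum of fractions with distinct prime denominators is too close to an integer, every
numerator is divisible by its denominator. -/
lemma key_frac (Ps : Finset ℕ) (hPs : ∀ p ∈ Ps, p.Prime) (γ : ℕ → ℤ) (m : ℤ) (η : ℝ)
    (hη : η * ((∏ p ∈ Ps.filter (fun p : ℕ => ¬ (p : ℤ) ∣ γ p), p : ℕ) : ℝ) ≤ 1)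
    (h : |∑ p ∈ Ps, (γ p : ℝ) / p - m| < η) :
    ∀ p ∈ Ps, (p : ℤ) ∣ γ p := by
  by_contra hcon
  push Not at hcon
  obtain ⟨q, hq, hqd⟩ := hcon
  set Bs := Ps.filter (fun p : ℕ => ¬ (p : ℤ) ∣ γ p) with hBs
  have hqB : q ∈ Bs := mem_filter.2 ⟨hq, hqd⟩
  have hBp : ∀ p ∈ Bs, p.Prime := fun p hp => hPs p (mem_filter.1 hp).1
  set W := ∏ p ∈ Bs, p with hW
  have hWpos : 0 < W := prod_pos fun p hp => (hBp p hp).pos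
  have hWr : (0 : ℝ) < W := by exact_mod_cast hWpos
  have hsplit : ∑ p ∈ Ps, (γ p : ℝ) / p
      = ∑ p ∈ Bs, (γ p : ℝ) / p + ((∑ p ∈ Ps.filter (fun p : ℕ => (p : ℤ) ∣ γ p), γ p / p : ℤ) : ℝ) := by
    rw [← sum_filter_add_sum_filter_not Ps (fun p : ℕ => (p : ℤ) ∣ γ p), add_comm]
    congr 1
    push_cast
    refine sum_congr rfl fun p hp => ?_
    rw [mem_filter] at hp
    rw [Int.cast_div hp.2 (by exact_mod_cast (hPs p hp.1).ne_zero)]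
    simp
  have hB : ∑ p ∈ Bs, (γ p : ℝ) / p = ((∑ p ∈ Bs, γ p * (W / p : ℕ) : ℤ) : ℝ) / W := by
    rw [Int.cast_sum, sum_div]
    refine sum_congr rfl fun p hp => ?_
    have hd : p ∣ W := dvd_prod_of_mem _ hp
    have hp0 : (p : ℝ) ≠ 0 := by exact_mod_cast (hBp p hp).ne_zero
    rw [Int.cast_mul, Int.cast_natCast, Nat.cast_div hd hp0]
    field_simp
  set A : ℤ := ∑ p ∈ Bs, γ p * (W / p : ℕ) with hA
  rw [hsplit, hB] at h
  set r : ℤ := ∑ p ∈ Ps.filter (fun p : ℕ => (p : ℤ) ∣ γ p), γ p / p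
  have h2 : |((A + W * (r - m) : ℤ) : ℝ)| < 1 := by
    have e : ((A + W * (r - m) : ℤ) : ℝ) = W * ((A : ℝ) / W + r - m) := by
      push_cast; field_simp; ring
    rw [e, abs_mul, abs_of_pos hWr]
    calc (W : ℝ) * |(A : ℝ) / W + r - m| < W * η := by gcongr
      _ ≤ 1 := by linarith
  have h3 : A + W * (r - m) = 0 := by
    have : |A + W * (r - m)| < 1 := by exact_mod_cast h2
    exact Int.abs_lt_one_iff.1 this
  have hqA : (q : ℤ) ∣ A := by
    have : A = W * (m - r) := by linarith
    rw [this]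
    exact Dvd.dvd.mul_right (by exact_mod_cast dvd_prod_of_mem _ hqB) _
  have hqprime : Prime (q : ℤ) := Nat.prime_iff_prime_int.1 (hBp q hqB)
  rw [hA, ← add_sum_erase _ _ hqB] at hqA
  have hrest : (q : ℤ) ∣ ∑ p ∈ Bs.erase q, γ p * (W / p : ℕ) := by
    apply dvd_sum
    intro p hp
    apply Dvd.dvd.mul_left
    rw [mem_erase] at hp
    have hWp : W / p = ∏ x ∈ Bs.erase p, x := by
      rw [hW, ← mul_prod_erase _ _ hp.2, Nat.mul_div_cancel_left _ (hBp p hp.2).pos]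
    rw [hWp]
    exact_mod_cast dvd_prod_of_mem (fun x : ℕ => x) (mem_erase.2 ⟨Ne.symm hp.1, hqB⟩)
  have h4 := (Int.dvd_add_left hrest).1 hqA
  rcases hqprime.dvd_or_dvd h4 with h5 | h5
  · exact hqd h5
  · have hWq : W / q = ∏ x ∈ Bs.erase q, x := by
      rw [hW, ← mul_prod_erase _ _ hqB, Nat.mul_div_cancel_left _ (hBp q hqB).pos]
    rw [hWq] at h5
    have h6 : q ∣ ∏ x ∈ Bs.erase q, x := by exact_mod_cast h5
    rw [Prime.dvd_finsetProd_iff (hBp q hqB).prime] at h6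
    obtain ⟨x, hx, hqx⟩ := h6
    rw [mem_erase] at hx
    exact hx.1 ((Nat.prime_dvd_prime_iff_eq (hBp q hqB) (hBp x hx.2)).1 hqx).symm

lemma prod_subset_union_le {A B C : Finset ℕ} (h : A ⊆ B ∪ C) (hB : ∀ p ∈ B, 1 ≤ p)
    (hC : ∀ p ∈ C, 1 ≤ p) : ∏ p ∈ A, p ≤ (∏ p ∈ B, p) * ∏ p ∈ C, p := by
  calc ∏ p ∈ A, p ≤ ∏ p ∈ B ∪ C, p := prod_le_prod_of_subset_of_one_le' h (by
        intro i hi _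
        rcases mem_union.1 hi with h | h
        · exact hB i h
        · exact hC i h)
    _ ≤ (∏ p ∈ B ∪ C, p) * ∏ p ∈ B ∩ C, p := by
        apply Nat.le_mul_of_pos_right
        exact prod_pos fun p hp => hB p (mem_inter.1 hp).1
    _ = _ := prod_union_inter

open Classical in
lemma exists_bad {P Q : ℕ} (hP : 0 < P) (hQ : Q ^ 4 ≤ P) (Ps : Finset ℕ)
    (hPs : ∀ p ∈ Ps, p.Prime) (T : Finset ℕ) (hT : T ⊆ range P) :
    ∃ R : Finset ℕ, R.card ≤ T.card ^ 2 ∧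
    (∀ t ∈ T, ∀ t' ∈ T, ∀ β ∈ IQ (Ps \ R) Q, ∀ β' ∈ IQ (Ps \ R) Q, ∀ m : ℤ,
      |((t : ℝ) / P + Phi β) - ((t' : ℝ) / P + Phi β') - m| < 1 / (16 * P) → t = t' ∧ β = β') := by
  have hPr : (0 : ℝ) < P := by exact_mod_cast hP
  let Conf : ℕ × ℕ → (ℕ → ℤ) → ℕ → Prop := fun x γ q =>
    (∏ p ∈ Ps.filter (fun p : ℕ => ¬ (p : ℤ) ∣ γ p), p ≤ Q ^ 2) ∧
    (∃ m : ℤ, |((x.1 : ℝ) - x.2) / P + ∑ p ∈ Ps, (γ p : ℝ) / p - m| < 1 / (16 * P)) ∧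
    q ∈ Ps ∧ ¬ (q : ℤ) ∣ γ q
  have hbad : ∀ x : ℕ × ℕ, ∃ q : ℕ, (∃ γ q', Conf x γ q') → ∃ γ, Conf x γ q := by
    intro x
    by_cases h : ∃ γ q', Conf x γ q'
    · obtain ⟨γ, q', h'⟩ := h
      exact ⟨q', fun _ => ⟨γ, h'⟩⟩
    · exact ⟨0, fun h' => absurd h' h⟩
  choose bad hbad using hbad
  refine ⟨(T ×ˢ T).image bad, ?_, ?_⟩
  · refine card_image_le.trans ?_
    rw [card_product, sq]
  intro t ht t' ht' β hβ β' hβ' m hm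
  have h1 := mem_IQ hβ
  have h2 := mem_IQ hβ'
  have hsub : Ps \ (T ×ˢ T).image bad ⊆ Ps := sdiff_subset
  rw [Phi_eq_sum (h1.1.trans hsub), Phi_eq_sum (h2.1.trans hsub)] at hm
  set γ : ℕ → ℤ := fun p => (β p : ℤ) - β' p with hγ
  have hγs : ∑ p ∈ Ps, (γ p : ℝ) / p = ∑ p ∈ Ps, (β p : ℝ) / p - ∑ p ∈ Ps, (β' p : ℝ) / p := by
    rw [← sum_sub_distrib]
    refine sum_congr rfl fun p _ => ?_
    simp only [hγ]; push_cast; ring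
  have hm' : |((t : ℝ) - t') / P + ∑ p ∈ Ps, (γ p : ℝ) / p - m| < 1 / (16 * P) := by
    rw [hγs]
    convert hm using 2
    ring
  have hprod : ∏ p ∈ Ps.filter (fun p : ℕ => ¬ (p : ℤ) ∣ γ p), p ≤ Q ^ 2 := by
    have hs : Ps.filter (fun p : ℕ => ¬ (p : ℤ) ∣ γ p) ⊆ β.support ∪ β'.support := by
      intro p hp
      rw [mem_filter] at hp
      by_contra hc
      rw [mem_union, not_or, Finsupp.notMem_support_iff, Finsupp.notMem_support_iff] at hc
      apply hp.2
      simp [hγ, hc.1, hc.2]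
    refine (prod_subset_union_le hs (fun p hp => (hPs p (hsub (h1.1 hp))).one_le)
      (fun p hp => (hPs p (hsub (h2.1 hp))).one_le)).trans ?_
    rw [sq]
    exact Nat.mul_le_mul h1.2.1 h2.2.1
  by_cases hall : ∀ p ∈ Ps, (p : ℤ) ∣ γ p
  · have hββ : β = β' := by
      ext p
      by_cases hp : p ∈ Ps
      · have hlt : ∀ β : ℕ →₀ ℕ, (∀ p ∈ β.support, β p < p) → β p < p := by
          intro β h
          by_cases hs : p ∈ β.support
          · exact h p hs
          · rw [Finsupp.notMem_support_iff] at hs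
            rw [hs]; exact (hPs p hp).pos
        have a1 := hlt β h1.2.2
        have a2 := hlt β' h2.2.2
        have := Int.eq_zero_of_abs_lt_dvd (hall p hp) (by
          simp only [hγ]
          rw [abs_lt]; constructor <;> omega)
        simp only [hγ] at this
        omega
      · have a1 : β p = 0 := by
          by_contra h0
          exact hp (hsub (h1.1 (Finsupp.mem_support_iff.2 h0)))
        have a2 : β' p = 0 := by
          by_contra h0
          exact hp (hsub (h2.1 (Finsupp.mem_support_iff.2 h0)))
        rw [a1, a2]
    refine ⟨?_, hββ⟩
    rw [hγs, hββ, sub_self, add_zero] at hm'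
    have b1 := mem_range.1 (hT ht)
    have b2 := mem_range.1 (hT ht')
    have e : ((t : ℝ) - t') / P - m = (((t : ℤ) - t' - P * m : ℤ) : ℝ) / P := by
      push_cast; field_simp
    rw [e, abs_div, abs_of_pos hPr, div_lt_div_iff₀ hPr (by positivity)] at hm'
    have h16 : |(((t : ℤ) - t' - P * m : ℤ) : ℝ)| < 1 := by
      nlinarith [abs_nonneg (((t : ℤ) - t' - P * m : ℤ) : ℝ)]
    have h0 : |(t : ℤ) - t' - P * m| < 1 := by exact_mod_cast h16
    have h00 := Int.abs_lt_one_iff.1 h0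
    have hd : (P : ℤ) ∣ (t : ℤ) - t' := ⟨m, by linarith⟩
    have := Int.eq_zero_of_abs_lt_dvd hd (by rw [abs_lt]; constructor <;> omega)
    omega
  · exfalso
    push Not at hall
    obtain ⟨q, hq, hqd⟩ := hall
    have hex : ∃ γ q', Conf (t, t') γ q' := ⟨γ, q, hprod, ⟨m, hm'⟩, hq, hqd⟩
    obtain ⟨γ₀, hp0, ⟨m₀, hm0⟩, hqb, hqd0⟩ := hbad (t, t') hex
    set q₀ := bad (t, t') with hq0
    have hqR : q₀ ∈ (T ×ˢ T).image bad := mem_image.2 ⟨(t, t'), mem_product.2 ⟨ht, ht'⟩, rfl⟩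
    have hγq : γ q₀ = 0 := by
      have z1 : β q₀ = 0 := by
        by_contra h0
        exact (mem_sdiff.1 (h1.1 (Finsupp.mem_support_iff.2 h0))).2 hqR
      have z2 : β' q₀ = 0 := by
        by_contra h0
        exact (mem_sdiff.1 (h2.1 (Finsupp.mem_support_iff.2 h0))).2 hqR
      simp [hγ, z1, z2]
    have hk := key_frac Ps hPs (fun p => γ p - γ₀ p) (m - m₀) (1 / (8 * P)) (by
      have hs : Ps.filter (fun p : ℕ => ¬ (p : ℤ) ∣ γ p - γ₀ p) ⊆
          Ps.filter (fun p : ℕ => ¬ (p : ℤ) ∣ γ p) ∪ Ps.filter (fun p : ℕ => ¬ (p : ℤ) ∣ γ₀ p) := by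
        intro p hp
        rw [mem_filter] at hp
        by_contra hc
        simp only [mem_union, mem_filter, hp.1, true_and, not_or, not_not] at hc
        exact hp.2 (dvd_sub hc.1 hc.2)
      have hle := (prod_subset_union_le hs (fun p hp => (hPs p (mem_filter.1 hp).1).one_le)
        (fun p hp => (hPs p (mem_filter.1 hp).1).one_le)).trans (Nat.mul_le_mul hprod hp0)
      have hle2 := hle.trans (show Q ^ 2 * Q ^ 2 ≤ P by rw [← pow_add]; exact hQ)
      have hle3 : ((∏ p ∈ Ps.filter (fun p : ℕ => ¬ (p : ℤ) ∣ γ p - γ₀ p), p : ℕ) : ℝ) ≤ P := by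
        exact_mod_cast hle2
      rw [div_mul_eq_mul_div, one_mul, div_le_one (by positivity)]
      linarith) (by
      have e : ∑ p ∈ Ps, ((γ p - γ₀ p : ℤ) : ℝ) / p - ((m - m₀ : ℤ) : ℝ)
          = (((t : ℝ) - t') / P + ∑ p ∈ Ps, (γ p : ℝ) / p - m)
            - (((t : ℝ) - t') / P + ∑ p ∈ Ps, (γ₀ p : ℝ) / p - m₀) := by
        push_cast
        simp_rw [sub_div]
        rw [sum_sub_distrib]; ring
      rw [e]
      refine (abs_sub _ _).trans_lt ?_
      have : (1 : ℝ) / (8 * P) = 1 / (16 * P) + 1 / (16 * P) := by field_simp; norm_num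
      rw [this]
      exact add_lt_add hm' hm0)
    have := hk q₀ hqb
    simp only [hγq, zero_sub, dvd_neg] at this
    exact hqd0 this

end PartC

section PartD

open Finset

lemma mertens_one {n : ℕ} (hn : 1 ≤ n) :
    ∑ p ∈ Nat.primesLE n, Real.log p / p ≤ Real.log n + Real.log 4 := by
  have hnr : (0 : ℝ) < n := by exact_mod_cast hn
  have h1 : ∑ e ∈ range n, Real.log ((e + 1 : ℕ) : ℝ) ≤ n * Real.log n := by
    calc ∑ e ∈ range n, Real.log ((e + 1 : ℕ) : ℝ) ≤ ∑ e ∈ range n, Real.log n := by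
          refine sum_le_sum fun e he => ?_
          apply Real.log_le_log (by positivity)
          exact_mod_cast mem_range.1 he
      _ = _ := by simp
  have h2 : ∀ e ∈ range n, ∑ p ∈ (Nat.primesLE n).filter (fun p => p ∣ e + 1), Real.log p
      ≤ Real.log ((e + 1 : ℕ) : ℝ) := by
    intro e _
    have hsub : (Nat.primesLE n).filter (fun p => p ∣ e + 1) ⊆ (e + 1).primeFactors := by
      intro p hp
      rw [mem_filter, Nat.mem_primesLE] at hp
      exact Nat.mem_primeFactors.2 ⟨hp.1.2, hp.2, by omega⟩
    calc ∑ p ∈ (Nat.primesLE n).filter (fun p => p ∣ e + 1), Real.log p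
        ≤ ∑ p ∈ (e + 1).primeFactors, Real.log p := by
          apply sum_le_sum_of_subset_of_nonneg hsub
          intro p _ _
          exact Real.log_natCast_nonneg p
      _ = Real.log ((∏ p ∈ (e + 1).primeFactors, p : ℕ) : ℝ) := by
          rw [Nat.cast_prod, Real.log_prod]
          intro p hp
          exact_mod_cast (Nat.prime_of_mem_primeFactors hp).ne_zero
      _ ≤ _ := by
          apply Real.log_le_log
          · exact_mod_cast prod_pos fun p hp => (Nat.prime_of_mem_primeFactors hp).pos
          · exact_mod_cast Nat.le_of_dvd (by omega) (Nat.prod_primeFactors_dvd (e + 1))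
  have h3 : ∑ p ∈ Nat.primesLE n, ((n / p : ℕ) : ℝ) * Real.log p ≤ n * Real.log n := by
    refine le_trans (le_of_eq ?_) ((sum_le_sum h2).trans h1)
    simp_rw [sum_filter]
    rw [sum_comm]
    refine sum_congr rfl fun p _ => ?_
    rw [← sum_filter, sum_const, Nat.card_multiples, nsmul_eq_mul]
  have h4 : ∑ p ∈ Nat.primesLE n, Real.log p ≤ Real.log 4 * n := by
    rw [← Chebyshev.theta_eq_sum_primesLE_log]
    exact Chebyshev.theta_le_log4_mul_x hnr.le
  have h5 : n * ∑ p ∈ Nat.primesLE n, Real.log p / p ≤ n * Real.log n + Real.log 4 * n := by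
    refine le_trans ?_ (add_le_add h3 h4)
    rw [mul_sum, ← sum_add_distrib]
    refine sum_le_sum fun p hp => ?_
    have hp' := (Nat.mem_primesLE.1 hp).2
    have hpr : (0 : ℝ) < p := by exact_mod_cast hp'.pos
    have hlog : 0 ≤ Real.log p := Real.log_natCast_nonneg p
    have hdiv : (n : ℝ) / p ≤ (n / p : ℕ) + 1 := by
      rw [div_le_iff₀ hpr]
      have := Nat.lt_div_mul_add hp'.pos (a := n)
      have h : (n : ℝ) ≤ ((n / p * p + p : ℕ) : ℝ) := by exact_mod_cast this.le
      push_cast at h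
      linarith
    calc (n : ℝ) * (Real.log p / p) = (n / p) * Real.log p := by ring
      _ ≤ ((n / p : ℕ) + 1) * Real.log p := by gcongr
      _ = _ := by ring
  have : n * ∑ p ∈ Nat.primesLE n, Real.log p / p ≤ n * (Real.log n + Real.log 4) := by linarith
  exact le_of_mul_le_mul_left this hnr

lemma zeta_partial {ε : ℝ} (hε : 0 < ε) (m : ℕ) :
    ∑ n ∈ range m, ((n + 1 : ℕ) : ℝ) ^ (-(1 + ε)) ≤ 1 + 1 / ε := by
  have : ∀ m : ℕ, ∑ n ∈ range (m + 1), ((n + 1 : ℕ) : ℝ) ^ (-(1 + ε))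
      ≤ 1 + 1 / ε - (1 / ε) * ((m + 1 : ℕ) : ℝ) ^ (-ε) := by
    intro m
    induction m with
    | zero => simp
    | succ m ih =>
      rw [sum_range_succ]
      have hm1 : (0 : ℝ) < ((m + 1 : ℕ) : ℝ) := by positivity
      have hm2 : (0 : ℝ) < ((m + 1 + 1 : ℕ) : ℝ) := by positivity
      set x : ℝ := ((m + 1 + 1 : ℕ) : ℝ) with hx
      have hxx : ((m + 1 : ℕ) : ℝ) = x - 1 := by rw [hx]; push_cast; ring
      rw [hxx] at ih hm1
      have key : ε * x ^ (-(1 + ε)) ≤ (x - 1) ^ (-ε) - x ^ (-ε) := by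
        have e1 : x ^ (-(1 + ε)) = x ^ (-ε) * x⁻¹ := by
          rw [neg_add_rev, Real.rpow_add hm2, Real.rpow_neg_one]
        have e2 : (x - 1) ^ (-ε) = x ^ (-ε) * (1 - x⁻¹) ^ (-ε) := by
          rw [← Real.mul_rpow hm2.le]
          · congr 1; field_simp
          · rw [sub_nonneg]; apply inv_le_one_of_one_le₀; linarith
        have hpos : 0 < 1 - x⁻¹ := by
          rw [sub_pos]; apply inv_lt_one_of_one_lt₀; linarith
        have e3 : 1 + ε * x⁻¹ ≤ (1 - x⁻¹) ^ (-ε) := by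
          rw [Real.rpow_def_of_pos hpos]
          have hl := Real.log_le_sub_one_of_pos hpos
          have : ε * x⁻¹ ≤ Real.log (1 - x⁻¹) * -ε := by nlinarith
          linarith [Real.add_one_le_exp (Real.log (1 - x⁻¹) * -ε)]
        rw [e1, e2]
        have hxp : 0 < x ^ (-ε) := Real.rpow_pos_of_pos hm2 _
        nlinarith
      have key2 : x ^ (-(1 + ε)) ≤ (1 / ε) * ((x - 1) ^ (-ε) - x ^ (-ε)) := by
        rw [one_div, ← div_eq_inv_mul, le_div_iff₀ hε]; linarith
      linarith
  rcases m with _ | m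
  · simp; positivity
  · refine (this m).trans ?_
    have : 0 ≤ (1 / ε) * ((m + 1 : ℕ) : ℝ) ^ (-ε) := by positivity
    linarith

/-- `n ↦ n ^ (-s)` as a monoid homomorphism -/
noncomputable def powHom (s : ℝ) : ℕ →* ℝ where
  toFun n := (n : ℝ) ^ (-s)
  map_one' := by simp
  map_mul' m n := by
    push_cast
    rw [Real.mul_rpow (by positivity) (by positivity)]

lemma powHom_lt_one {s : ℝ} (hs : 0 < s) {p : ℕ} (hp : p.Prime) : ‖powHom s p‖ < 1 := by
  have : powHom s p = (p : ℝ) ^ (-s) := rfl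
  rw [this, Real.norm_eq_abs, abs_of_nonneg (by positivity)]
  apply Real.rpow_lt_one_of_one_lt_of_neg
  · exact_mod_cast hp.one_lt
  · linarith

lemma euler_upper {ε : ℝ} (hε : 0 < ε) (z : ℕ) :
    ∏ p ∈ Nat.primesLE z, (1 - (p : ℝ) ^ (-(1 + ε)))⁻¹ ≤ 1 + 1 / ε := by
  have h := (EulerProduct.summable_and_hasSum_smoothNumbers_prod_primesBelow_geometric
    (f := powHom (1 + ε)) (fun hp => powHom_lt_one (by linarith) hp) (z + 1)).2
  refine hasSum_le_of_sum_le h fun s => ?_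
  have hz := zeta_partial hε ((s.sup (fun x => (x : ℕ))) + 1)
  refine le_trans ?_ hz
  have e : ∑ i ∈ s, powHom (1 + ε) i
      = ∑ n ∈ s.image (fun x : (z + 1).smoothNumbers => (x : ℕ) - 1), ((n + 1 : ℕ) : ℝ) ^ (-(1 + ε)) := by
    rw [sum_image]
    · refine sum_congr rfl fun x _ => ?_
      have : (x : ℕ) ≠ 0 := Nat.ne_zero_of_mem_smoothNumbers x.2
      rw [Nat.sub_add_cancel (by omega)]
      rfl
    · intro x _ y _ hxy
      have h1 : (x : ℕ) ≠ 0 := Nat.ne_zero_of_mem_smoothNumbers x.2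
      have h2 : (y : ℕ) ≠ 0 := Nat.ne_zero_of_mem_smoothNumbers y.2
      apply Subtype.ext
      simp only at hxy
      omega
  rw [e]
  apply sum_le_sum_of_subset_of_nonneg
  · intro n hn
    obtain ⟨x, hx, rfl⟩ := mem_image.1 hn
    rw [mem_range]
    have := le_sup (f := fun x : (z + 1).smoothNumbers => (x : ℕ)) hx
    omega
  · intros; positivity

lemma V_lower {y : ℕ} : Real.log y ≤ ∏ p ∈ Nat.primesLE y, (1 - (p : ℝ)⁻¹)⁻¹ := by
  have h := (EulerProduct.summable_and_hasSum_smoothNumbers_prod_primesBelow_geometric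
    (f := powHom 1) (fun hp => powHom_lt_one (by linarith) hp) (y + 1)).2
  have e : ∏ p ∈ Nat.primesLE y, (1 - (p : ℝ)⁻¹)⁻¹
      = ∏ p ∈ (y + 1).primesBelow, (1 - powHom 1 p)⁻¹ := by
    refine prod_congr rfl fun p _ => ?_
    have : powHom 1 p = (p : ℝ) ^ (-1 : ℝ) := rfl
    rw [this, Real.rpow_neg_one]
  rw [e]
  rcases Nat.eq_zero_or_pos y with hy | hy
  · subst hy
    simp
  have hh : Real.log y ≤ harmonic y := by
    refine le_trans ?_ (log_add_one_le_harmonic y)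
    apply Real.log_le_log (by exact_mod_cast hy)
    push_cast; linarith
  refine hh.trans ?_
  let g : ℕ → (y + 1).smoothNumbers := fun n =>
    if hn : n < y then ⟨n + 1, Nat.mem_smoothNumbers_of_lt (by omega) (by omega)⟩
    else ⟨1, Nat.mem_smoothNumbers_of_lt (by omega) (by omega)⟩
  have hg : ∀ n < y, ((g n : ℕ)) = n + 1 := by
    intro n hn
    simp [g, hn]
  have hinj : Set.InjOn g (range y : Finset ℕ) := by
    intro a ha b hb hab
    simp only [coe_range, Set.mem_Iio] at ha hb
    have := congrArg (fun x : (y + 1).smoothNumbers => (x : ℕ)) hab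
    simp only [hg a ha, hg b hb] at this
    omega
  have hs := sum_le_hasSum ((range y).image g) (fun i _ => by
    show (0 : ℝ) ≤ ((i : ℕ) : ℝ) ^ (-1 : ℝ)
    positivity) h
  refine le_trans (le_of_eq ?_) hs
  rw [sum_image hinj, harmonic]
  push_cast
  refine sum_congr rfl fun n hn => ?_
  rw [hg n (mem_range.1 hn)]
  show _ = ((n + 1 : ℕ) : ℝ) ^ (-1 : ℝ)
  rw [Real.rpow_neg_one]
  push_cast; rfl

lemma V_upper {z : ℕ} (hz : 2 ≤ z) :
    ∏ p ∈ Nat.primesLE z, (1 - (p : ℝ)⁻¹)⁻¹ ≤ 3 * Real.exp 6 * Real.log z := by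
  have hl2 : Real.log 2 ≤ Real.log z := Real.log_le_log (by norm_num) (by exact_mod_cast hz)
  have hl2' : 0.69 < Real.log 2 := by linarith [Real.log_two_gt_d9]
  have hlz : 0 < Real.log z := by linarith
  set ε : ℝ := 1 / Real.log z with hε
  have hεpos : 0 < ε := by positivity
  have hfac : ∀ p ∈ Nat.primesLE z, (1 - (p : ℝ)⁻¹)⁻¹
      ≤ (1 - (p : ℝ) ^ (-(1 + ε)))⁻¹ * Real.exp (2 * ε * (Real.log p / p)) := by
    intro p hp
    have hp' := (Nat.mem_primesLE.1 hp).2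
    have hp2 : (2 : ℝ) ≤ p := by exact_mod_cast hp'.two_le
    have hp0 : (0 : ℝ) < p := by linarith
    have hi : (p : ℝ)⁻¹ ≤ 1 / 2 := by rw [one_div]; exact inv_anti₀ (by norm_num) hp2
    have hipos : 0 < (p : ℝ)⁻¹ := by positivity
    have e1 : (p : ℝ) ^ (-(1 + ε)) = (p : ℝ)⁻¹ * (p : ℝ) ^ (-ε) := by
      rw [neg_add, Real.rpow_add hp0, Real.rpow_neg_one]
    have h1 : 1 - ε * Real.log p ≤ (p : ℝ) ^ (-ε) := by
      rw [Real.rpow_def_of_pos hp0]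
      linarith [Real.add_one_le_exp (Real.log p * -ε)]
    have h2 : (p : ℝ) ^ (-ε) ≤ 1 := Real.rpow_le_one_of_one_le_of_nonpos (by linarith) (by linarith)
    have hlp : 0 ≤ Real.log p := Real.log_natCast_nonneg p
    rw [e1]
    set q := (p : ℝ)⁻¹
    set w := (p : ℝ) ^ (-ε)
    have hw : 0 < 1 - q * w := by nlinarith
    have hex := Real.add_one_le_exp (2 * ε * (Real.log p / p))
    have hdiv : Real.log p / p = q * Real.log p := by rw [div_eq_inv_mul]
    rw [hdiv] at hex ⊢
    rw [← div_eq_inv_mul, inv_eq_one_div, div_le_div_iff₀ (by linarith) hw]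
    set v := Real.log p
    have hb : 1 - q * w ≤ (1 - q) * (2 * ε * (q * v) + 1) := by
      have a1 : q * (1 - w) ≤ q * (ε * v) := by
        apply mul_le_mul_of_nonneg_left _ hipos.le; linarith
      have a2 : 0 ≤ q * (ε * v) := by positivity
      nlinarith
    calc 1 * (1 - q * w) ≤ (1 - q) * (2 * ε * (q * v) + 1) := by linarith
      _ ≤ (1 - q) * Real.exp (2 * ε * (q * v)) := by
          apply mul_le_mul_of_nonneg_left hex; linarith
      _ = _ := by ring
  calc ∏ p ∈ Nat.primesLE z, (1 - (p : ℝ)⁻¹)⁻¹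
      ≤ ∏ p ∈ Nat.primesLE z, ((1 - (p : ℝ) ^ (-(1 + ε)))⁻¹ * Real.exp (2 * ε * (Real.log p / p))) := by
        refine prod_le_prod (fun p hp => ?_) hfac
        have hp' := (Nat.mem_primesLE.1 hp).2
        rw [inv_nonneg, sub_nonneg]
        apply inv_le_one_of_one_le₀
        exact_mod_cast hp'.one_le
    _ = (∏ p ∈ Nat.primesLE z, (1 - (p : ℝ) ^ (-(1 + ε)))⁻¹) *
          Real.exp (2 * ε * ∑ p ∈ Nat.primesLE z, Real.log p / p) := by
        rw [prod_mul_distrib, ← Real.exp_sum, mul_sum]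
    _ ≤ (3 * Real.log z) * Real.exp 6 := by
        gcongr
        · refine (euler_upper hεpos z).trans ?_
          rw [hε, one_div_one_div]; linarith
        · have hm := mertens_one (n := z) (by omega)
          have h4 : Real.log 4 = 2 * Real.log 2 := by
            rw [show (4 : ℝ) = 2 ^ 2 by norm_num, Real.log_pow]; norm_num
          calc 2 * ε * ∑ p ∈ Nat.primesLE z, Real.log p / p ≤ 2 * ε * (3 * Real.log z) := by
                gcongr; linarith
            _ = 6 := by rw [hε]; field_simp; norm_num
    _ = _ := by ring

/-- lower bound for the product over large primes with few primes removed -/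
lemma V_range {y z : ℕ} (hz : 2 ≤ z) (R : Finset ℕ) (hR : R.card ≤ z) :
    Real.log y / (3 * Real.exp 8 * Real.log z)
      ≤ ∏ p ∈ ((Nat.primesLE y).filter (fun p => z < p)) \ R, (1 - (p : ℝ)⁻¹)⁻¹ := by
  have hlz : 0 < Real.log z := Real.log_pos (by exact_mod_cast hz)
  have hone : ∀ p : ℕ, p.Prime → 1 ≤ (1 - (p : ℝ)⁻¹)⁻¹ := by
    intro p hp
    have hp2 : (2 : ℝ) ≤ p := by exact_mod_cast hp.two_le
    have hi : (p : ℝ)⁻¹ ≤ 1 / 2 := by rw [one_div]; exact inv_anti₀ (by norm_num) hp2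
    have hipos : 0 < (p : ℝ)⁻¹ := by positivity
    apply (one_le_inv₀ (by linarith)).2; linarith
  set Ps := ((Nat.primesLE y).filter (fun p => z < p)) \ R with hPs
  set Rz := ((Nat.primesLE y).filter (fun p => z < p)) ∩ R with hRz
  have hsub : Nat.primesLE y ⊆ Nat.primesLE z ∪ (Rz ∪ Ps) := by
    intro p hp
    simp only [mem_union, hPs, hRz, mem_inter, mem_sdiff, mem_filter, hp, true_and]
    have hpp := (Nat.mem_primesLE.1 hp).2
    by_cases h : z < p
    · by_cases h' : p ∈ R <;> simp [h, h']
    · left; exact Nat.mem_primesLE.2 ⟨by omega, hpp⟩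
  have hRzp : ∀ p ∈ Rz, p.Prime ∧ z < p := by
    intro p hp
    have := mem_filter.1 (mem_inter.1 hp).1
    exact ⟨(Nat.mem_primesLE.1 this.1).2, this.2⟩
  have hPsp : ∀ p ∈ Ps, p.Prime ∧ z < p := by
    intro p hp
    have := mem_filter.1 (mem_sdiff.1 hp).1
    exact ⟨(Nat.mem_primesLE.1 this.1).2, this.2⟩
  have hdis1 : Disjoint Rz Ps := by
    rw [disjoint_left]
    intro p h1 h2
    exact (mem_sdiff.1 h2).2 (mem_inter.1 h1).2
  have hdis2 : Disjoint (Nat.primesLE z) (Rz ∪ Ps) := by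
    rw [disjoint_left]
    intro p h1 h2
    have h3 := (Nat.mem_primesLE.1 h1).1
    rcases mem_union.1 h2 with h | h
    · have := (hRzp p h).2; omega
    · have := (hPsp p h).2; omega
  have hRb : ∏ p ∈ Rz, (1 - (p : ℝ)⁻¹)⁻¹ ≤ Real.exp 2 := by
    have hzr : (0 : ℝ) < z := by positivity
    have hf : ∀ p ∈ Rz, (1 - (p : ℝ)⁻¹)⁻¹ ≤ Real.exp (2 / z) := by
      intro p hp
      obtain ⟨h1, h2⟩ := hRzp p hp
      have hp2 : (2 : ℝ) ≤ p := by exact_mod_cast h1.two_le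
      have hi : (p : ℝ)⁻¹ ≤ 1 / 2 := by rw [one_div]; exact inv_anti₀ (by norm_num) hp2
      have hipos : 0 < (p : ℝ)⁻¹ := by positivity
      have hle : (p : ℝ)⁻¹ ≤ (z : ℝ)⁻¹ := inv_anti₀ hzr (by exact_mod_cast h2.le)
      have e1 : (1 - (p : ℝ)⁻¹)⁻¹ ≤ 1 + 2 * (p : ℝ)⁻¹ := by
        rw [inv_le_iff_one_le_mul₀ (by linarith)]; nlinarith
      have := Real.add_one_le_exp (2 / (z : ℝ))
      rw [div_eq_mul_inv] at this ⊢
      linarith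
    calc ∏ p ∈ Rz, (1 - (p : ℝ)⁻¹)⁻¹ ≤ ∏ p ∈ Rz, Real.exp (2 / z) :=
          prod_le_prod (fun p hp => by linarith [hone p (hRzp p hp).1]) hf
      _ = Real.exp (Rz.card * (2 / z)) := by rw [prod_const, Real.exp_nat_mul]
      _ ≤ Real.exp 2 := by
          apply Real.exp_le_exp.2
          have : (Rz.card : ℝ) ≤ z := by
            exact_mod_cast (card_le_card (inter_subset_right)).trans hR
          calc (Rz.card : ℝ) * (2 / z) ≤ z * (2 / z) := by gcongr
            _ = 2 := by field_simp
  have hPnn : 0 ≤ ∏ p ∈ Ps, (1 - (p : ℝ)⁻¹)⁻¹ :=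
    prod_nonneg fun p hp => by linarith [hone p (hPsp p hp).1]
  have hRnn : 0 ≤ ∏ p ∈ Rz, (1 - (p : ℝ)⁻¹)⁻¹ :=
    prod_nonneg fun p hp => by linarith [hone p (hRzp p hp).1]
  have hall : Real.log y ≤ (3 * Real.exp 6 * Real.log z) *
      (Real.exp 2 * ∏ p ∈ Ps, (1 - (p : ℝ)⁻¹)⁻¹) := by
    calc Real.log y ≤ ∏ p ∈ Nat.primesLE y, (1 - (p : ℝ)⁻¹)⁻¹ := V_lower
      _ ≤ ∏ p ∈ Nat.primesLE z ∪ (Rz ∪ Ps), (1 - (p : ℝ)⁻¹)⁻¹ := by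
          apply Finset.prod_le_prod_of_subset_of_one_le hsub
          · intro p hp
            linarith [hone p (Nat.mem_primesLE.1 hp).2]
          · intro p hp _
            rcases mem_union.1 hp with h | h
            · exact hone p (Nat.mem_primesLE.1 h).2
            · rcases mem_union.1 h with h | h
              · exact hone p (hRzp p h).1
              · exact hone p (hPsp p h).1
      _ = (∏ p ∈ Nat.primesLE z, (1 - (p : ℝ)⁻¹)⁻¹) * ((∏ p ∈ Rz, (1 - (p : ℝ)⁻¹)⁻¹) *
            ∏ p ∈ Ps, (1 - (p : ℝ)⁻¹)⁻¹) := by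
          rw [prod_union hdis2, prod_union hdis1]
      _ ≤ _ := by
          gcongr
          exact V_upper hz
  have he : Real.exp 8 = Real.exp 6 * Real.exp 2 := by rw [← Real.exp_add]; norm_num
  rw [div_le_iff₀ (by positivity), he]
  linarith

end PartD

section PartE

open Finset

lemma exp_le_one_add_two {x : ℝ} (h0 : 0 ≤ x) (h1 : x ≤ 1) : Real.exp x ≤ 1 + 2 * x := by
  have h := convexOn_exp.2 (Set.mem_univ 0) (Set.mem_univ 1)
    (show 0 ≤ 1 - x by linarith) h0 (by ring)
  simp only [smul_eq_mul, mul_zero, mul_one, zero_add, Real.exp_zero] at h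
  have := Real.exp_one_lt_d9
  nlinarith

lemma rankin {k y s : ℕ} (hy : 2 ≤ y) (hs : 12 * k + 1 ≤ s) (Ps : Finset ℕ)
    (hPs : ∀ p ∈ Ps, p.Prime ∧ p ≤ y ∧ 2 * k < p) :
    (1 / 2 : ℝ) * ∏ p ∈ Ps, (1 + (k : ℝ) / (p - k))
      ≤ ∑ E ∈ Ps.powerset.filter (fun E => ∏ p ∈ E, p ≤ y ^ s), ∏ p ∈ E, (k : ℝ) / (p - k) := by
  have hl2 : Real.log 2 ≤ Real.log y := Real.log_le_log (by norm_num) (by exact_mod_cast hy)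
  have hl2' : 0.69 < Real.log 2 := by linarith [Real.log_two_gt_d9]
  have hly : 0 < Real.log y := by linarith
  have hypos : (0 : ℝ) < y := by positivity
  set ε : ℝ := 1 / Real.log y with hε
  have hεpos : 0 < ε := by positivity
  have hh0 : ∀ p ∈ Ps, 0 ≤ (k : ℝ) / (p - k) := by
    intro p hp
    have : (2 * k : ℝ) < p := by exact_mod_cast (hPs p hp).2.2
    have hk : (0 : ℝ) ≤ k := by positivity
    apply div_nonneg hk; linarith
  set V := ∏ p ∈ Ps, (1 + (k : ℝ) / (p - k)) with hV
  have hVpos : 0 ≤ V := prod_nonneg fun p hp => by linarith [hh0 p hp]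
  have hVsum : V = ∑ E ∈ Ps.powerset, ∏ p ∈ E, (k : ℝ) / (p - k) := by
    rw [hV, prod_one_add]
  have hsplit := sum_filter_add_sum_filter_not Ps.powerset (fun E => ∏ p ∈ E, p ≤ y ^ s)
    (fun E => ∏ p ∈ E, (k : ℝ) / (p - k))
  rw [← hVsum] at hsplit
  have htail : ∑ E ∈ Ps.powerset.filter (fun E => ¬ ∏ p ∈ E, p ≤ y ^ s), ∏ p ∈ E, (k : ℝ) / (p - k)
      ≤ V / 2 := by
    have hQ : ((y : ℝ) ^ s) ^ (-ε) = Real.exp (-(s : ℝ)) := by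
      rw [← Real.rpow_natCast, ← Real.rpow_mul hypos.le, Real.rpow_def_of_pos hypos, hε]
      congr 1; field_simp
    calc ∑ E ∈ Ps.powerset.filter (fun E => ¬ ∏ p ∈ E, p ≤ y ^ s), ∏ p ∈ E, (k : ℝ) / (p - k)
        ≤ ∑ E ∈ Ps.powerset.filter (fun E => ¬ ∏ p ∈ E, p ≤ y ^ s),
            Real.exp (-(s : ℝ)) * ∏ p ∈ E, ((k : ℝ) / (p - k) * (p : ℝ) ^ ε) := by
          refine sum_le_sum fun E hE => ?_
          obtain ⟨hE1, hE2⟩ := mem_filter.1 hE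
          have hE1 := mem_powerset.1 hE1
          rw [prod_mul_distrib, Real.finsetProd_rpow _ _ (fun p _ => by positivity), ← hQ]
          have hpr : 0 ≤ ∏ p ∈ E, (k : ℝ) / (p - k) := prod_nonneg fun p hp => hh0 p (hE1 hp)
          have hge : ((y : ℝ) ^ s) ≤ ∏ p ∈ E, (p : ℝ) := by
            have := (not_le.1 hE2).le
            rw [← Nat.cast_prod]; exact_mod_cast this
          have hpw : ((y : ℝ) ^ s) ^ ε ≤ (∏ p ∈ E, (p : ℝ)) ^ ε :=
            Real.rpow_le_rpow (by positivity) hge hεpos.le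
          have h1 : 1 ≤ ((y : ℝ) ^ s) ^ (-ε) * (∏ p ∈ E, (p : ℝ)) ^ ε := by
            calc (1 : ℝ) = ((y : ℝ) ^ s) ^ (-ε) * ((y : ℝ) ^ s) ^ ε := by
                  rw [← Real.rpow_add (by positivity)]; simp
              _ ≤ _ := by gcongr
          nlinarith
      _ ≤ ∑ E ∈ Ps.powerset, Real.exp (-(s : ℝ)) * ∏ p ∈ E, ((k : ℝ) / (p - k) * (p : ℝ) ^ ε) := by
          apply sum_le_sum_of_subset_of_nonneg (filter_subset _ _)
          intro E hE _
          apply mul_nonneg (Real.exp_pos _).le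
          apply prod_nonneg
          intro p hp
          have := hh0 p (mem_powerset.1 hE hp)
          positivity
      _ = Real.exp (-(s : ℝ)) * ∏ p ∈ Ps, (1 + (k : ℝ) / (p - k) * (p : ℝ) ^ ε) := by
          rw [← mul_sum, prod_one_add]
      _ ≤ Real.exp (-(s : ℝ)) * ∏ p ∈ Ps, ((1 + (k : ℝ) / (p - k)) *
            Real.exp (4 * k * ε * (Real.log p / p))) := by
          gcongr with p hp
          · intro p hp
            have := hh0 p hp
            positivity
          · obtain ⟨hp1, hp2, hp3⟩ := hPs p hp
            have hpp : (0 : ℝ) < p := by exact_mod_cast hp1.pos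
            have hlp : 0 ≤ Real.log p := Real.log_natCast_nonneg p
            have hx1 : ε * Real.log p ≤ 1 := by
              rw [hε, one_div, inv_mul_le_iff₀ hly, mul_one]
              exact Real.log_le_log hpp (by exact_mod_cast hp2)
            have h1 : (p : ℝ) ^ ε ≤ 1 + 2 * (ε * Real.log p) := by
              rw [Real.rpow_def_of_pos hpp, mul_comm]
              exact exp_le_one_add_two (by positivity) hx1
            have h2k : (2 * k : ℝ) < p := by exact_mod_cast hp3
            have hk : (0 : ℝ) ≤ k := by positivity
            have hh : (k : ℝ) / (p - k) ≤ 2 * k / p := by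
              rw [div_le_div_iff₀ (by linarith) hpp]
              nlinarith
            have hn := hh0 p hp
            set h := (k : ℝ) / (p - k)
            have hu : 0 ≤ ε * Real.log p := by positivity
            have h3 : h * (2 * (ε * Real.log p)) ≤ 4 * k * ε * (Real.log p / p) := by
              calc h * (2 * (ε * Real.log p)) ≤ (2 * k / p) * (2 * (ε * Real.log p)) := by gcongr
                _ = _ := by field_simp; ring
            have h4 := Real.add_one_le_exp (4 * k * ε * (Real.log p / p))
            calc 1 + h * (p : ℝ) ^ ε ≤ 1 + h * (1 + 2 * (ε * Real.log p)) := by gcongr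
              _ ≤ (1 + h) * (1 + h * (2 * (ε * Real.log p))) := by nlinarith [mul_nonneg hn (mul_nonneg hn hu)]
              _ ≤ _ := by gcongr; linarith
      _ = V * Real.exp (-(s : ℝ) + 4 * k * ε * ∑ p ∈ Ps, Real.log p / p) := by
          rw [prod_mul_distrib, ← Real.exp_sum, mul_sum, Real.exp_add]; ring
      _ ≤ V * Real.exp (-1) := by
          gcongr
          have hm := mertens_one (n := y) (by omega)
          have h4 : Real.log 4 = 2 * Real.log 2 := by
            rw [show (4 : ℝ) = 2 ^ 2 by norm_num, Real.log_pow]; norm_num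
          have hsub : ∑ p ∈ Ps, Real.log p / p ≤ 3 * Real.log y := by
            calc ∑ p ∈ Ps, Real.log p / p ≤ ∑ p ∈ Nat.primesLE y, Real.log p / p := by
                  apply sum_le_sum_of_subset_of_nonneg
                  · intro p hp
                    exact Nat.mem_primesLE.2 ⟨(hPs p hp).2.1, (hPs p hp).1⟩
                  · intro p _ _
                    exact div_nonneg (Real.log_natCast_nonneg p) (by positivity)
              _ ≤ _ := by linarith
          have : 4 * k * ε * ∑ p ∈ Ps, Real.log p / p ≤ 12 * k := by
            calc 4 * k * ε * ∑ p ∈ Ps, Real.log p / p ≤ 4 * k * ε * (3 * Real.log y) := by gcongr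
              _ = 12 * k := by rw [hε]; field_simp; ring
          have hs' : (12 * k + 1 : ℝ) ≤ s := by exact_mod_cast hs
          linarith
      _ ≤ V / 2 := by
          have : Real.exp (-1) ≤ 1 / 2 := by
            rw [Real.exp_neg, one_div]
            apply inv_anti₀ (by norm_num)
            linarith [Real.exp_one_gt_d9]
          nlinarith
  linarith

/-- lower bound for the sieve sum -/
lemma sieve_lower {k y s z : ℕ} (hk : 1 ≤ k) (hy : 2 ≤ y) (hs : 12 * k + 1 ≤ s) (hz : 2 * k ≤ z)
    (R : Finset ℕ) (hR : R.card ≤ z) :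
    (1 / 2 : ℝ) * (Real.log y / (3 * Real.exp 8 * Real.log z)) ^ k
      ≤ ∑ E ∈ (((Nat.primesLE y).filter (fun p => z < p)) \ R).powerset.filter
          (fun E => ∏ p ∈ E, p ≤ y ^ s), ∏ p ∈ E, (k : ℝ) / (p - k) := by
  set Ps := ((Nat.primesLE y).filter (fun p => z < p)) \ R with hPs
  have hPsp : ∀ p ∈ Ps, p.Prime ∧ p ≤ y ∧ 2 * k < p := by
    intro p hp
    have h1 := mem_filter.1 (mem_sdiff.1 hp).1
    have h2 := Nat.mem_primesLE.1 h1.1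
    exact ⟨h2.2, h2.1, by omega⟩
  refine le_trans ?_ (rankin hy hs Ps hPsp)
  have hly : 0 ≤ Real.log y := Real.log_natCast_nonneg y
  have hlz : 0 ≤ Real.log z := Real.log_natCast_nonneg z
  have hV := V_range (y := y) (z := z) (by omega) R hR
  gcongr
  calc _ ≤ (∏ p ∈ Ps, (1 - (p : ℝ)⁻¹)⁻¹) ^ k := by gcongr
    _ = ∏ p ∈ Ps, ((1 - (p : ℝ)⁻¹)⁻¹) ^ k := by rw [prod_pow]
    _ ≤ ∏ p ∈ Ps, (1 + (k : ℝ) / (p - k)) := by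
        refine prod_le_prod (fun p hp => ?_) (fun p hp => ?_)
        · have hp1 := (hPsp p hp).1
          apply pow_nonneg
          rw [inv_nonneg, sub_nonneg]
          apply inv_le_one_of_one_le₀
          exact_mod_cast hp1.one_le
        · obtain ⟨hp1, hp2, hp3⟩ := hPsp p hp
          have hpp : (0 : ℝ) < p := by exact_mod_cast hp1.pos
          have hp2 : (2 : ℝ) ≤ p := by exact_mod_cast hp1.two_le
          have h2k : (2 * k : ℝ) < p := by exact_mod_cast hp3
          have hk0 : (0 : ℝ) ≤ k := by positivity
          have hi : (p : ℝ)⁻¹ ≤ 1 / 2 := by rw [one_div]; exact inv_anti₀ (by norm_num) hp2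
          have hb := one_add_mul_le_pow (a := -(p : ℝ)⁻¹) (by linarith) k
          have e : 1 + (k : ℝ) / (p - k) = (1 + k * (-(p : ℝ)⁻¹))⁻¹ := by
            have : (p : ℝ) - k ≠ 0 := by linarith
            have h2 : 1 + (k : ℝ) * (-(p : ℝ)⁻¹) = (p - k) / p := by field_simp; ring
            rw [h2, inv_div]; field_simp; ring
          rw [e, inv_pow]
          apply inv_anti₀
          · have h2 : 1 + (k : ℝ) * (-(p : ℝ)⁻¹) = (p - k) / p := by field_simp; ring
            rw [h2]; apply div_pos <;> linarith
          · exact hb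

end PartE

section PartF

open Finset

/-- `1 + 3 log m` to the power `k` grows slowly -/
lemma log_pow_bound {k : ℕ} (hk : 1 ≤ k) {m : ℕ} (hm : 1 ≤ m) :
    (1 + 3 * Real.log m) ^ k ≤ (31 * k : ℝ) ^ k * (m : ℝ) ^ ((1 : ℝ) / 10) := by
  have hk' : (1 : ℝ) ≤ k := by exact_mod_cast hk
  have hm' : (1 : ℝ) ≤ m := by exact_mod_cast hm
  have h := Real.log_le_rpow_div (x := m) (by positivity) (ε := 1 / (10 * k)) (by positivity)
  have h1 : (1 : ℝ) ≤ (m : ℝ) ^ (1 / (10 * k) : ℝ) := Real.one_le_rpow hm' (by positivity)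
  have hl : 0 ≤ Real.log m := Real.log_natCast_nonneg m
  have e : ((m : ℝ) ^ (1 / (10 * k) : ℝ)) ^ k = (m : ℝ) ^ ((1 : ℝ) / 10) := by
    rw [← Real.rpow_natCast, ← Real.rpow_mul (by positivity)]
    congr 1; field_simp
  rw [← e, ← mul_pow]
  gcongr
  rw [div_div_eq_mul_div, div_one] at h
  nlinarith

lemma level_set {P k y s z : ℕ} (hk : 1 ≤ k) (hP : 0 < P) (hy : 2 ≤ y) (hs : 12 * k + 1 ≤ s)
    (hz : 2 * k ≤ z) (hQ : (y ^ s) ^ 4 ≤ P) (X : Finset ℕ) (hX : X ⊆ range P)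
    (hres : ∀ p : ℕ, p.Prime → z < p → p ≤ y → (X.image (· % p)).card + k ≤ p)
    (T : Finset ℕ) (hT : T ⊆ range P) (hTne : T.Nonempty) :
    ∑ t ∈ T, ‖SS X (t / P)‖ ^ 2 ≤ 128 * (93 * k * Real.exp 8) ^ k * (Real.log z / Real.log y) ^ k
      * P * X.card * (T.card : ℝ) ^ ((1 : ℝ) / 10) := by
  classical
  have hTc : 1 ≤ T.card := hTne.card_pos
  set z' := max z (T.card ^ 2) with hz'
  have hzz : z ≤ z' := le_max_left _ _
  obtain ⟨R, hR, hNC⟩ := exists_bad hP hQ ((Nat.primesLE y).filter (fun p => z' < p))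
    (fun p hp => (Nat.mem_primesLE.1 (mem_filter.1 hp).1).2) T hT
  have hR' : R.card ≤ z' := hR.trans (le_max_right _ _)
  have hlow := sieve_lower (z := z') hk hy hs (by omega) R hR'
  have hmain := main_ineq (k := k) (Q := y ^ s) hP X hX
    (((Nat.primesLE y).filter (fun p => z' < p)) \ R) (by
      intro p hp
      have h1 := mem_filter.1 (mem_sdiff.1 hp).1
      have h2 := Nat.mem_primesLE.1 h1.1
      have h3 := h1.2
      exact ⟨h2.2, by omega, hres p h2.2 (by omega) h2.1⟩) T hNC
  have hz2 : (2 : ℝ) ≤ z := by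
    have : 2 ≤ z := by omega
    exact_mod_cast this
  have hlz : Real.log 2 ≤ Real.log z := Real.log_le_log (by norm_num) hz2
  have hl2' : 0.69 < Real.log 2 := by linarith [Real.log_two_gt_d9]
  have hly : 0 < Real.log y := Real.log_pos (by exact_mod_cast hy)
  have hTl : 0 ≤ Real.log T.card := Real.log_natCast_nonneg _
  have hlz' : Real.log z' ≤ Real.log z * (1 + 3 * Real.log T.card) := by
    rcases max_choice z (T.card ^ 2) with h | h
    · rw [hz', h]; nlinarith
    · rw [hz', h]; push_cast
      rw [Real.log_pow]; push_cast; nlinarith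
  have hlz'pos : 0 < Real.log z' := by
    have : Real.log z ≤ Real.log z' := Real.log_le_log (by linarith) (by exact_mod_cast hzz)
    linarith
  set Sg := ∑ t ∈ T, ‖SS X (t / P)‖ ^ 2 with hSg
  have hSg0 : 0 ≤ Sg := sum_nonneg fun _ _ => by positivity
  have h1 : (1 / 2 : ℝ) * (Real.log y / (3 * Real.exp 8 * Real.log z')) ^ k * Sg ≤ 64 * P * X.card :=
    (mul_le_mul_of_nonneg_right hlow hSg0).trans hmain
  have hpos : 0 < (Real.log y / (3 * Real.exp 8 * Real.log z')) ^ k := by positivity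
  have h2 : Sg ≤ 128 * P * X.card * ((3 * Real.exp 8 * Real.log z') / Real.log y) ^ k := by
    rw [← inv_div (Real.log y), inv_pow, ← div_eq_mul_inv, le_div_iff₀ hpos]
    linarith
  have hlp := log_pow_bound hk hTc
  calc Sg ≤ 128 * P * X.card * ((3 * Real.exp 8 * Real.log z') / Real.log y) ^ k := h2
    _ ≤ 128 * P * X.card * ((3 * Real.exp 8 * (Real.log z * (1 + 3 * Real.log T.card))) / Real.log y) ^ k := by
        gcongr
    _ = 128 * P * X.card * ((3 * Real.exp 8) ^ k * (Real.log z / Real.log y) ^ k * (1 + 3 * Real.log T.card) ^ k) := by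
        rw [← mul_pow, ← mul_pow]; congr 2; ring
    _ ≤ 128 * P * X.card * ((3 * Real.exp 8) ^ k * (Real.log z / Real.log y) ^ k * ((31 * k : ℝ) ^ k * (T.card : ℝ) ^ ((1 : ℝ) / 10))) := by
        have : 0 ≤ Real.log z / Real.log y := by apply div_nonneg <;> linarith
        gcongr
    _ = _ := by
        have : (93 * k * Real.exp 8) ^ k = (3 * Real.exp 8) ^ k * (31 * k : ℝ) ^ k := by
          rw [← mul_pow]; congr 1; ring
        rw [this]; ring

/-- from level sets to a moment bound -/
lemma moment_aux {ι : Type*} [DecidableEq ι] (v : ι → ℝ) (hv : ∀ i, 0 ≤ v i) (K : ℝ) (hK : 0 ≤ K)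
    (n : ℕ) : ∀ T : Finset ι, T.card = n →
    (∀ T' ⊆ T, T'.Nonempty → ∑ t ∈ T', v t ^ 2 ≤ K * (T'.card : ℝ) ^ ((1 : ℝ) / 10)) →
    ∑ t ∈ T, v t ^ ((5 : ℝ) / 2) ≤ K ^ ((5 : ℝ) / 4) *
      ∑ j ∈ range n, ((j + 1 : ℕ) : ℝ) ^ (-(1 + (1 : ℝ) / 8)) := by
  induction n with
  | zero =>
    intro T hT _
    rw [card_eq_zero] at hT
    subst hT; simp
  | succ n ih =>
    intro T hT h
    have hne : T.Nonempty := by rw [← card_pos]; omega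
    obtain ⟨t, ht, hmin⟩ := exists_min_image T v hne
    have hih := ih (T.erase t) (by rw [card_erase_of_mem ht]; omega)
      (fun T' hT' => h T' (hT'.trans (erase_subset _ _)))
    rw [← add_sum_erase _ _ ht, sum_range_succ, mul_add]
    have hT0 := h T subset_rfl hne
    have hlow : ((n + 1 : ℕ) : ℝ) * v t ^ 2 ≤ ∑ t ∈ T, v t ^ 2 := by
      rw [← hT, ← nsmul_eq_mul]
      apply card_nsmul_le_sum
      intro x hx
      have := hmin x hx
      have := hv t
      gcongr
    rw [hT] at hT0
    set m := ((n + 1 : ℕ) : ℝ) with hm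
    have hmpos : 0 < m := by rw [hm]; positivity
    have h1 : v t ^ 2 ≤ K * m ^ (-(9 : ℝ) / 10) := by
      have e : m * m ^ (-(9 : ℝ) / 10) = m ^ ((1 : ℝ) / 10) := by
        nth_rewrite 1 [← Real.rpow_one m]
        rw [← Real.rpow_add hmpos]; norm_num
      have : m * v t ^ 2 ≤ m * (K * m ^ (-(9 : ℝ) / 10)) := by
        calc _ ≤ K * m ^ ((1 : ℝ) / 10) := hlow.trans hT0
          _ = _ := by rw [← e]; ring
      exact le_of_mul_le_mul_left this hmpos
    have h2 : v t ^ ((5 : ℝ) / 2) ≤ K ^ ((5 : ℝ) / 4) * m ^ (-(1 + (1 : ℝ) / 8)) := by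
      have e1 : v t ^ ((5 : ℝ) / 2) = (v t ^ 2) ^ ((5 : ℝ) / 4) := by
        rw [← Real.rpow_natCast, ← Real.rpow_mul (hv t)]; norm_num
      have e2 : m ^ (-(1 + (1 : ℝ) / 8)) = (m ^ (-(9 : ℝ) / 10)) ^ ((5 : ℝ) / 4) := by
        rw [← Real.rpow_mul hmpos.le]; norm_num
      rw [e1, e2, ← Real.mul_rpow hK (by positivity)]
      exact Real.rpow_le_rpow (by positivity) h1 (by norm_num)
    linarith

lemma moment {ι : Type*} [DecidableEq ι] (v : ι → ℝ) (hv : ∀ i, 0 ≤ v i) (K : ℝ) (hK : 0 ≤ K)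
    (T : Finset ι)
    (h : ∀ T' ⊆ T, T'.Nonempty → ∑ t ∈ T', v t ^ 2 ≤ K * (T'.card : ℝ) ^ ((1 : ℝ) / 10)) :
    ∑ t ∈ T, v t ^ ((5 : ℝ) / 2) ≤ 9 * K ^ ((5 : ℝ) / 4) := by
  refine (moment_aux v hv K hK T.card T rfl h).trans ?_
  have := zeta_partial (ε := 1 / 8) (by norm_num) T.card
  have h9 : (1 : ℝ) + 1 / (1 / 8) = 9 := by norm_num
  rw [h9] at this
  rw [mul_comm]
  gcongr

/-- the residue class lemma -/
lemma residues {k : ℕ} (a b : Fin k → ℤ) (p : ℕ) (hp : p.Prime) (M b₀ : ℕ)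
    (hM : ¬ p ∣ M)
    (hdisc : ¬ (p : ℤ) ∣ (∏ i, a i) *
      ∏ i, ∏ j ∈ Finset.univ.filter (fun j => j ≠ i), (a i * b j - b i * a j))
    (X : Finset ℕ)
    (hX : ∀ n ∈ X, ¬ (p : ℤ) ∣ ∏ i, (a i * ((b₀ + n * M : ℕ) : ℤ) + b i)) :
    (X.image (· % p)).card + k ≤ p := by
  haveI : Fact p.Prime := ⟨hp⟩
  have hM' : (M : ZMod p) ≠ 0 := by
    rwa [Ne, ZMod.natCast_eq_zero_iff]
  have ha : ∀ i, (a i : ZMod p) ≠ 0 := by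
    intro i h
    rw [ZMod.intCast_zmod_eq_zero_iff_dvd] at h
    exact hdisc (Dvd.dvd.mul_right (h.trans (dvd_prod_of_mem a (mem_univ i))) _)
  have hab : ∀ i j, j ≠ i → ((a i * b j - b i * a j : ℤ) : ZMod p) ≠ 0 := by
    intro i j hij h
    rw [ZMod.intCast_zmod_eq_zero_iff_dvd] at h
    apply hdisc
    apply Dvd.dvd.mul_left
    refine (h.trans ?_).trans (dvd_prod_of_mem _ (mem_univ i))
    exact dvd_prod_of_mem (fun j => a i * b j - b i * a j) (mem_filter.2 ⟨mem_univ j, hij⟩)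
  let r : Fin k → ZMod p := fun i => -((b i : ZMod p) * (a i : ZMod p)⁻¹ + b₀) * (M : ZMod p)⁻¹
  have hr : Function.Injective r := by
    intro i j hij
    by_contra hne
    have h1 : (b i : ZMod p) * (a i : ZMod p)⁻¹ = (b j : ZMod p) * (a j : ZMod p)⁻¹ := by
      have := mul_right_cancel₀ (inv_ne_zero hM') hij
      have := neg_injective this
      exact add_right_cancel this
    apply hab i j (Ne.symm hne)
    push_cast
    have hi := ha i
    have hj := ha j
    field_simp at h1
    rw [h1]; ring
  let Y : Finset (ZMod p) := (X.image (· % p)).image (fun n : ℕ => (n : ZMod p))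
  have hYc : Y.card = (X.image (· % p)).card := by
    apply card_image_of_injOn
    intro m hm n hn hmn
    obtain ⟨m', _, rfl⟩ := mem_image.1 (mem_coe.1 hm)
    obtain ⟨n', _, rfl⟩ := mem_image.1 (mem_coe.1 hn)
    have := (ZMod.natCast_eq_natCast_iff' _ _ _).1 hmn
    simpa using this
  have hdis : Disjoint Y (univ.image r) := by
    rw [disjoint_left]
    intro u hu hu'
    obtain ⟨m, hm, rfl⟩ := mem_image.1 hu
    obtain ⟨n, hn, rfl⟩ := mem_image.1 hm
    obtain ⟨i, _, hi⟩ := mem_image.1 hu'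
    simp only [ZMod.natCast_mod] at hi
    apply hX n hn
    refine dvd_trans ?_ (dvd_prod_of_mem _ (mem_univ i))
    rw [← ZMod.intCast_zmod_eq_zero_iff_dvd]
    push_cast
    rw [← hi]
    have h := ha i
    simp only [r]
    field_simp
    ring
  have hc := card_union_of_disjoint hdis
  rw [card_image_of_injective _ hr, hYc, card_univ, Fintype.card_fin] at hc
  rw [← hc]
  calc _ ≤ (univ : Finset (ZMod p)).card := card_le_univ _
    _ = p := by rw [card_univ, ZMod.card]

end PartF

section PartG

open Finset

lemma FTP_eq {P : ℕ} [Fact P.Prime] (f : ZMod P → ℝ) (t : ZMod P) :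
    FTP f t = (1 / (P : ℂ)) * ∑ y : ZMod P, (f y : ℂ) * ZMod.stdAddChar (t * y) := by
  unfold FTP
  congr 1
  refine sum_congr rfl fun y _ => ?_
  congr 1
  have : t * y = (((t.val * y.val : ℕ) : ℤ) : ZMod P) := by
    push_cast; simp
  rw [this, ZMod.stdAddChar_coe]
  push_cast
  congr 1; ring

lemma LamL_eq {P : ℕ} [Fact P.Prime] (cc : Fin 3 → ℤ) (f : ZMod P → ℝ) :
    ((LamL cc f : ℝ) : ℂ) = (P : ℂ) ^ 2 * ∑ t : ZMod P, ∏ i, FTP f ((cc i : ZMod P) * t) := by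
  have hP : (P : ℂ) ≠ 0 := by exact_mod_cast (Fact.out : P.Prime).ne_zero
  have h1 : ∀ t : ZMod P, ∏ i, FTP f ((cc i : ZMod P) * t)
      = (1 / (P : ℂ)) ^ 3 * ∑ n : Fin 3 → ZMod P, (∏ i, (f (n i) : ℂ)) *
          ZMod.stdAddChar (t * ∑ i, (cc i : ZMod P) * n i) := by
    intro t
    simp only [FTP_eq]
    rw [prod_mul_distrib, prod_const, card_univ, Fintype.card_fin, prod_univ_sum,
      Fintype.piFinset_univ]
    congr 1
    refine sum_congr rfl fun n _ => ?_
    rw [prod_mul_distrib, mul_sum, Fin.sum_univ_three, AddChar.map_add_eq_mul, AddChar.map_add_eq_mul,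
      ← Fin.prod_univ_three (fun i => (ZMod.stdAddChar (t * ((cc i : ZMod P) * n i)) : ℂ))]
    congr 1
    refine prod_congr rfl fun i _ => ?_
    congr 1; ring
  simp only [h1]
  rw [← mul_sum, sum_comm]
  simp only [← mul_sum]
  simp only [AddChar.sum_mulShift _ (ZMod.isPrimitive_stdAddChar P), ZMod.card]
  unfold LamL
  rw [sum_filter]
  push_cast
  rw [mul_sum, mul_sum]
  refine sum_congr rfl fun n _ => ?_
  split_ifs with h
  · push_cast; field_simp
  · simp

lemma FTP_conv {P : ℕ} [Fact P.Prime] (f g : ZMod P → ℝ) (t : ZMod P) :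
    FTP (convP f g) t = FTP f t * FTP g t := by
  simp only [FTP_eq, convP]
  push_cast
  have h : ∀ n : ZMod P, (1 / (P : ℂ) * ∑ y, (f (n - y) : ℂ) * (g y : ℂ)) * ZMod.stdAddChar (t * n)
      = (1 / (P : ℂ)) * ∑ y, (f (n - y) : ℂ) * ZMod.stdAddChar (t * (n - y)) *
          ((g y : ℂ) * ZMod.stdAddChar (t * y)) := by
    intro n
    rw [mul_assoc, sum_mul]
    congr 1
    refine sum_congr rfl fun y _ => ?_
    have : t * n = t * (n - y) + t * y := by ring
    rw [this, AddChar.map_add_eq_mul]; ring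
  simp only [h]
  rw [← mul_sum, sum_comm]
  have h2 : ∀ y : ZMod P, ∑ n, (f (n - y) : ℂ) * ZMod.stdAddChar (t * (n - y)) *
          ((g y : ℂ) * ZMod.stdAddChar (t * y))
      = (∑ n, (f n : ℂ) * ZMod.stdAddChar (t * n)) * ((g y : ℂ) * ZMod.stdAddChar (t * y)) := by
    intro y
    rw [← sum_mul]
    congr 1
    exact Fintype.sum_equiv (Equiv.subRight y) _ _ (fun n => rfl)
  simp only [h2]
  rw [← mul_sum]; ring

lemma norm_FTP_le {P : ℕ} [Fact P.Prime] (B : Finset (ZMod P)) (t : ZMod P) :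
    ‖FTP (fCfun B) t‖ ≤ 1 := by
  have hP : (0 : ℝ) < P := by exact_mod_cast (Fact.out : P.Prime).pos
  rw [FTP_eq, norm_mul]
  have h1 : ‖∑ y : ZMod P, ((fCfun B y : ℝ) : ℂ) * ZMod.stdAddChar (t * y)‖ ≤ P := by
    refine (norm_sum_le _ _).trans ?_
    have : ∀ y : ZMod P, ‖((fCfun B y : ℝ) : ℂ) * ZMod.stdAddChar (t * y)‖
        = (P : ℝ) / B.card * (if y ∈ B then 1 else 0) := by
      intro y
      rw [norm_mul, AddChar.norm_apply, mul_one, Complex.norm_real, fCfun, Real.norm_eq_abs,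
        abs_of_nonneg]
      split_ifs <;> positivity
    simp only [this]
    rw [← mul_sum, sum_boole]
    simp only [filter_mem_eq_inter, univ_inter]
    rcases Nat.eq_zero_or_pos B.card with h0 | h0
    · rw [h0]; simp
    · have : (0 : ℝ) < B.card := by exact_mod_cast h0
      field_simp
      exact le_rfl
  have h2 : ‖(1 / (P : ℂ))‖ = 1 / P := by simp
  rw [h2, one_div, inv_mul_le_iff₀ hP, mul_one]
  exact h1

lemma FTP_image {P : ℕ} [Fact P.Prime] (X : Finset ℕ) (hX : X ⊆ range P) (t : ZMod P) :
    ‖FTP (fCfun (X.image (fun n : ℕ => (n : ZMod P)))) t‖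
      = ‖SS X ((t.val : ℝ) / P)‖ / X.card := by
  have hP : (P : ℂ) ≠ 0 := by exact_mod_cast (Fact.out : P.Prime).ne_zero
  have hinj : Set.InjOn (fun n : ℕ => (n : ZMod P)) (X : Set ℕ) := by
    intro m hm n hn hmn
    have h1 := (ZMod.natCast_eq_natCast_iff' _ _ _).1 hmn
    rwa [Nat.mod_eq_of_lt (mem_range.1 (hX hm)), Nat.mod_eq_of_lt (mem_range.1 (hX hn))] at h1
  have e : FTP (fCfun (X.image (fun n : ℕ => (n : ZMod P)))) t
      = (SS X ((t.val : ℝ) / P)) / X.card := by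
    unfold FTP fCfun
    rw [card_image_of_injOn hinj]
    have : ∀ y : ZMod P, (((P : ℝ) / (X.card : ℝ) * (if y ∈ X.image (fun n : ℕ => (n : ZMod P)) then 1 else 0) : ℝ) : ℂ) *
        Complex.exp (2 * Real.pi * Complex.I * (t.val : ℂ) * (y.val : ℂ) / (P : ℂ))
        = (P : ℂ) / X.card * (if y ∈ X.image (fun n : ℕ => (n : ZMod P)) then Complex.exp (2 * Real.pi * Complex.I * (t.val : ℂ) * (y.val : ℂ) / (P : ℂ)) else 0) := by
      intro y
      split_ifs <;> simp
    simp only [this]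
    rw [← mul_sum, ← sum_filter, filter_mem_eq_inter, univ_inter, sum_image hinj]
    have h2 : ∑ n ∈ X, Complex.exp (2 * Real.pi * Complex.I * (t.val : ℂ) * (((n : ZMod P)).val : ℂ) / (P : ℂ))
        = SS X ((t.val : ℝ) / P) := by
      unfold SS ee
      refine sum_congr rfl fun n hn => ?_
      rw [ZMod.val_natCast, Nat.mod_eq_of_lt (mem_range.1 (hX hn))]
      congr 1; push_cast; ring
    rw [h2]
    field_simp
  rw [e, norm_div]; simp

lemma three_aux {x y z : ℝ} (hx : 0 ≤ x) (hy : 0 ≤ y) (hz : 0 ≤ z) :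
    x ^ ((1 : ℝ) / 2) * y * z ≤ x ^ ((5 : ℝ) / 2) + y ^ ((5 : ℝ) / 2) + z ^ ((5 : ℝ) / 2) := by
  have key : ∀ m : ℝ, 0 ≤ m → x ≤ m → y ≤ m → z ≤ m → x ^ ((1 : ℝ) / 2) * y * z ≤ m ^ ((5 : ℝ) / 2) := by
    intro m hm h1 h2 h3
    have e : m ^ ((5 : ℝ) / 2) = m ^ ((1 : ℝ) / 2) * m * m := by
      rw [show (5 : ℝ) / 2 = 1 / 2 + 1 + 1 by norm_num, Real.rpow_add_of_nonneg hm (by norm_num) (by norm_num),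
        Real.rpow_add_of_nonneg hm (by norm_num) (by norm_num), Real.rpow_one]
    rw [e]
    gcongr
  have a1 : 0 ≤ x ^ ((5 : ℝ) / 2) := by positivity
  have a2 : 0 ≤ y ^ ((5 : ℝ) / 2) := by positivity
  have a3 : 0 ≤ z ^ ((5 : ℝ) / 2) := by positivity
  rcases le_total x y with h | h <;> rcases le_total y z with h' | h' <;>
    rcases le_total x z with h'' | h''
  · linarith [key z hz h'' h' le_rfl]
  · linarith [key z hz (h.trans h') h' le_rfl]
  · linarith [key y hy h le_rfl h']
  · linarith [key y hy h le_rfl h']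
  · linarith [key z hz h'' h' le_rfl]
  · linarith [key x hx le_rfl h h'']
  · linarith [key z hz h'' (h.trans h'') le_rfl]
  · linarith [key x hx le_rfl h h'']

lemma term_bound (F G : Fin 3 → ℂ) (hF : ∀ i, ‖F i‖ ≤ 1) (hG : ∀ i, ‖G i‖ ≤ 1) {ε₁ ε₂ : ℝ}
    (h1 : 0 < ε₁) (h2 : 0 < ε₂) (h : ε₁ < ‖F 0‖ → ∀ i, ‖G i - 1‖ ≤ ε₂) :
    ‖∏ i, F i - ∏ i, (F i * G i)‖ ≤ 3 * (ε₂ + ε₁ ^ ((1 : ℝ) / 2)) * ∑ i, ‖F i‖ ^ ((5 : ℝ) / 2) := by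
  rw [prod_mul_distrib]
  have e : ∏ i, F i - (∏ i, F i) * ∏ i, G i = (∏ i, F i) * (1 - ∏ i, G i) := by ring
  rw [e, norm_mul, norm_prod, Fin.prod_univ_three, Fin.prod_univ_three, Fin.sum_univ_three]
  have t := three_aux (norm_nonneg (F 0)) (norm_nonneg (F 1)) (norm_nonneg (F 2))
  set S := ‖F 0‖ ^ ((5 : ℝ) / 2) + ‖F 1‖ ^ ((5 : ℝ) / 2) + ‖F 2‖ ^ ((5 : ℝ) / 2)
  have hsq : ‖F 0‖ = ‖F 0‖ ^ ((1 : ℝ) / 2) * ‖F 0‖ ^ ((1 : ℝ) / 2) := by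
    rw [← Real.rpow_add_of_nonneg (norm_nonneg _) (by norm_num) (by norm_num)]; norm_num
  have hS : 0 ≤ S := by positivity
  have he : 0 ≤ ε₁ ^ ((1 : ℝ) / 2) := by positivity
  have hr1 : ‖F 0‖ ^ ((1 : ℝ) / 2) ≤ 1 := Real.rpow_le_one (norm_nonneg _) (hF 0) (by norm_num)
  by_cases hc : ε₁ < ‖F 0‖
  · have hg := h hc
    have b1 : ‖1 - G 0 * G 1 * G 2‖ ≤ 3 * ε₂ := by
      have e2 : 1 - G 0 * G 1 * G 2 = -((G 0 - 1) + G 0 * (G 1 - 1) + G 0 * G 1 * (G 2 - 1)) := by ring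
      rw [e2, norm_neg]
      refine (norm_add₃_le).trans ?_
      rw [norm_mul, norm_mul, norm_mul]
      have c1 : ‖G 0‖ * ‖G 1 - 1‖ ≤ 1 * ε₂ := by gcongr; exacts [hG 0, hg 1]
      have c2 : ‖G 0‖ * ‖G 1‖ * ‖G 2 - 1‖ ≤ 1 * 1 * ε₂ := by gcongr; exacts [hG 0, hG 1, hg 2]
      linarith [hg 0]
    have b2 : ‖F 0‖ * ‖F 1‖ * ‖F 2‖ ≤ S := by
      refine le_trans ?_ t
      gcongr
      have hr0 : 0 ≤ ‖F 0‖ ^ ((1 : ℝ) / 2) := by positivity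
      nlinarith
    calc _ ≤ S * (3 * ε₂) := by gcongr
      _ ≤ _ := by nlinarith [mul_nonneg hS he]
  · have b1 : ‖1 - G 0 * G 1 * G 2‖ ≤ 2 := by
      refine (norm_sub_le _ _).trans ?_
      rw [norm_mul, norm_mul, norm_one]
      have : ‖G 0‖ * ‖G 1‖ * ‖G 2‖ ≤ 1 * 1 * 1 := by gcongr; exacts [hG 0, hG 1, hG 2]
      linarith
    have b2 : ‖F 0‖ * ‖F 1‖ * ‖F 2‖ ≤ ε₁ ^ ((1 : ℝ) / 2) * S := by
      rw [hsq, mul_assoc, mul_assoc]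
      have : ‖F 0‖ ^ ((1 : ℝ) / 2) ≤ ε₁ ^ ((1 : ℝ) / 2) :=
        Real.rpow_le_rpow (norm_nonneg _) (not_lt.1 hc) (by norm_num)
      gcongr
      rw [← mul_assoc]; exact t
    calc _ ≤ (ε₁ ^ ((1 : ℝ) / 2) * S) * 2 := by gcongr
      _ ≤ _ := by nlinarith [mul_nonneg hS he, mul_nonneg hS h2.le]

lemma diff_bound {P : ℕ} [Fact P.Prime] (cc : Fin 3 → ℤ) (hc : ∀ i, (cc i : ZMod P) ≠ 0)
    (A' B : Finset (ZMod P)) {ε₁ ε₂ : ℝ} (h1 : 0 < ε₁) (h2 : 0 < ε₂)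
    (h : ∀ t, ε₁ < ‖FTP (fCfun A') t‖ → ∀ i : Fin 3,
      ‖FTP (fCfun B) ((cc i : ZMod P) * (cc 0 : ZMod P)⁻¹ * t) - 1‖ ≤ ε₂) :
    |LamL cc (fCfun A') - LamL cc (convP (fCfun A') (fCfun B))|
      ≤ 9 * (ε₂ + ε₁ ^ ((1 : ℝ) / 2)) * (P : ℝ) ^ 2 * ∑ t, ‖FTP (fCfun A') t‖ ^ ((5 : ℝ) / 2) := by
  rw [← Real.norm_eq_abs, ← Complex.norm_real]
  push_cast
  rw [LamL_eq, LamL_eq, ← mul_sub, ← sum_sub_distrib, norm_mul]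
  simp only [FTP_conv]
  have h3 : ‖(P : ℂ) ^ 2‖ = (P : ℝ) ^ 2 := by simp
  rw [h3]
  set f := fCfun A'
  set g := fCfun B
  set ss : ℝ := ε₂ + ε₁ ^ ((1 : ℝ) / 2)
  have hss : 0 ≤ ss := by positivity
  have hre : ∀ i, ∑ t, ‖FTP f ((cc i : ZMod P) * t)‖ ^ ((5 : ℝ) / 2) = ∑ t, ‖FTP f t‖ ^ ((5 : ℝ) / 2) := by
    intro i
    exact Fintype.sum_equiv (Equiv.mulLeft₀ _ (hc i)) _ _ (fun t => rfl)
  have hb : ‖∑ t : ZMod P, (∏ i, FTP f ((cc i : ZMod P) * t) -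
      ∏ i, (FTP f ((cc i : ZMod P) * t) * FTP g ((cc i : ZMod P) * t)))‖
      ≤ 9 * ss * ∑ t, ‖FTP f t‖ ^ ((5 : ℝ) / 2) := by
    refine (norm_sum_le _ _).trans ?_
    calc _ ≤ ∑ t : ZMod P, 3 * ss * ∑ i, ‖FTP f ((cc i : ZMod P) * t)‖ ^ ((5 : ℝ) / 2) := by
          refine sum_le_sum fun t _ => ?_
          refine term_bound (fun i => FTP f ((cc i : ZMod P) * t)) (fun i => FTP g ((cc i : ZMod P) * t))
            (fun i => norm_FTP_le A' _) (fun i => norm_FTP_le B _) h1 h2 ?_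
          intro hh i
          have := h _ hh i
          have e : (cc i : ZMod P) * (cc 0 : ZMod P)⁻¹ * ((cc 0 : ZMod P) * t) = (cc i : ZMod P) * t := by
            have := hc 0
            field_simp
          rwa [e] at this
      _ = _ := by
          rw [← mul_sum, sum_comm]
          simp only [hre, sum_const, card_univ, Fintype.card_fin]
          simp only [nsmul_eq_mul]; push_cast; ring
  calc _ ≤ (P : ℝ) ^ 2 * (9 * ss * ∑ t, ‖FTP f t‖ ^ ((5 : ℝ) / 2)) := by gcongr
    _ = _ := by ring

end PartG

section PartH

open Finset

lemma cpos_ge (cc : Fin 3 → ℤ) (hcc : ∀ i, cc i ≠ 0) (hti : ∑ i, cc i = 0) :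
    2 ≤ ∑ i ∈ Finset.univ.filter (fun i => 0 < cc i), cc i := by
  rw [sum_filter, Fin.sum_univ_three]
  rw [Fin.sum_univ_three] at hti
  have h0 := hcc 0
  have h1 := hcc 1
  have h2 := hcc 2
  split_ifs <;> omega

lemma primor_pos (z : ℝ) : 0 < primor z := by
  apply prod_pos
  intro p hp
  exact (mem_filter.1 hp).2.pos

lemma dvd_primor_iff {p : ℕ} (hp : p.Prime) (z : ℝ) : p ∣ primor z ↔ p ≤ ⌊z⌋₊ := by
  unfold primor
  constructor
  · intro h
    obtain ⟨q, hq, hpq⟩ := (hp.prime.dvd_finsetProd_iff _).1 h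
    obtain ⟨h1, h2⟩ := mem_filter.1 hq
    have := (Nat.prime_dvd_prime_iff_eq hp h2).1 hpq
    have := mem_range.1 h1
    omega
  · intro h
    exact dvd_prod_of_mem (fun p => p) (mem_filter.2 ⟨mem_range.2 (by omega), hp⟩)

lemma primor_le {N : ℕ} (hN : 1 ≤ N) : (primor (Real.log N / 3) : ℝ) ≤ (N : ℝ) ^ ((1 : ℝ) / 2) := by
  have hNr : (0 : ℝ) < N := by exact_mod_cast hN
  have hL : 0 ≤ Real.log N := Real.log_natCast_nonneg N
  have h1 : primor (Real.log N / 3) ≤ 4 ^ ⌊Real.log N / 3⌋₊ := primorial_le_four_pow _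
  have h2 : (primor (Real.log N / 3) : ℝ) ≤ (4 : ℝ) ^ ⌊Real.log N / 3⌋₊ := by exact_mod_cast h1
  refine h2.trans ?_
  rw [← Real.rpow_natCast, Real.rpow_def_of_pos (by norm_num), Real.rpow_def_of_pos hNr]
  apply Real.exp_le_exp.2
  have h4 : Real.log 4 = 2 * Real.log 2 := by
    rw [show (4 : ℝ) = 2 ^ 2 by norm_num, Real.log_pow]; norm_num
  have hl2 : Real.log 2 < 0.7 := by linarith [Real.log_two_lt_d9]
  have hl2' : 0 < Real.log 2 := Real.log_pos (by norm_num)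
  have hf := Nat.floor_le (show 0 ≤ Real.log N / 3 by positivity)
  rw [h4]
  calc 2 * Real.log 2 * ⌊Real.log N / 3⌋₊ ≤ 2 * 0.7 * (Real.log N / 3) := by gcongr
    _ ≤ _ := by linarith

/-- the main moment bound -/
lemma core_bound (k : ℕ) (hk : 1 ≤ k) (a b : Fin k → ℤ)
    (F : ℤ → ℤ) (hF : ∀ n : ℤ, F n = ∏ i, (a i * n + b i))
    (D : ℤ) (hD : D = (∏ i, a i) *
      ∏ i, ∏ j ∈ Finset.univ.filter (fun j => j ≠ i), (a i * b j - b i * a j)) (hD0 : D ≠ 0)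
    (c₀ : ℝ) (hc₀ : 0 < c₀) (η : ℝ) (hη : η = 1 / (8 * (12 * k + 1 : ℕ) + (4 * k + 1)))
    (N : ℕ) (hN1 : (2 * k + D.natAbs + 2 : ℝ) ≤ Real.log N / 3) (hN2 : (4 : ℝ) ≤ (N : ℝ) ^ η)
    (A : Finset ℕ) (hA : A ⊆ SFset F N ((N : ℝ) ^ ((1 : ℝ) / (4 * k + 1))))
    (δ : ℝ) (hδ : 0 < δ) (b₀ : ℕ) (M : ℕ) (hM : M = primor (Real.log N / 3))
    (X : Finset ℕ) (hXdef : X = Abset A N M b₀)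
    (hX : c₀ * δ * (Real.log (Real.log N)) ^ k / (Real.log N) ^ k * (N : ℝ) / (M : ℝ) ≤ (X.card : ℝ))
    (P : ℕ) [hPf : Fact P.Prime] (cp : ℝ) (hcp : 2 ≤ cp)
    (hP1 : cp * (N : ℝ) / (M : ℝ) ≤ P) (hP2 : (P : ℝ) ≤ 2 * cp * (N : ℝ) / (M : ℝ)) :
    ∑ t : ZMod P, ‖FTP (fCfun (X.image (fun n : ℕ => (n : ZMod P)))) t‖ ^ ((5 : ℝ) / 2)
      ≤ 9 * ((128 * (93 * k * Real.exp 8) ^ k * (2 / η) ^ k * (2 * cp / c₀)) / δ) ^ ((5 : ℝ) / 4) := by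
  classical
  have hkr : (1 : ℝ) ≤ k := by exact_mod_cast hk
  have hDr : (0 : ℝ) ≤ (D.natAbs : ℝ) := by positivity
  have hL : 12 ≤ Real.log N := by linarith
  have hN0 : 1 ≤ N := by
    rcases Nat.eq_zero_or_pos N with h | h
    · subst h; simp at hL; linarith
    · exact h
  have hNr : (1 : ℝ) ≤ N := by exact_mod_cast hN0
  have hNp : (0 : ℝ) < N := by linarith
  have hη0 : 0 < η := by rw [hη]; positivity
  have hMpos : 0 < M := by rw [hM]; exact primor_pos _
  have hMr : (0 : ℝ) < M := by exact_mod_cast hMpos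
  have hMle : (M : ℝ) ≤ (N : ℝ) ^ ((1 : ℝ) / 2) := by rw [hM]; exact primor_le hN0
  have hNM : (N : ℝ) ^ ((1 : ℝ) / 2) ≤ N / M := by
    rw [le_div_iff₀ hMr]
    calc (N : ℝ) ^ ((1 : ℝ) / 2) * M ≤ (N : ℝ) ^ ((1 : ℝ) / 2) * (N : ℝ) ^ ((1 : ℝ) / 2) := by gcongr
      _ = N := by rw [← Real.rpow_add hNp]; norm_num
  have hNMpos : 0 < (N : ℝ) / M := by positivity
  have hP1' : 2 * ((N : ℝ) / M) ≤ P := by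
    refine le_trans ?_ hP1
    rw [mul_div_assoc]; gcongr
  have hPN : (N : ℝ) ^ ((1 : ℝ) / 2) ≤ P := by linarith
  have hPpos : 0 < P := hPf.out.pos
  have hPr : (0 : ℝ) < P := by exact_mod_cast hPpos
  set L := Real.log N with hLdef
  set l := Real.log L with hl
  have hl0 : 0 < l := Real.log_pos (by linarith)
  set z := ⌊L / 3⌋₊ with hz
  have hz1 : 2 * k + D.natAbs + 2 ≤ z := by
    rw [hz, Nat.le_floor_iff (by linarith)]; push_cast; linarith
  have hzle : (z : ℝ) ≤ L := by
    have := Nat.floor_le (show 0 ≤ L / 3 by linarith)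
    linarith
  have hlz : Real.log z ≤ l := Real.log_le_log (by
    have : 0 < z := by omega
    exact_mod_cast this) hzle
  have hlz0 : 0 ≤ Real.log z := Real.log_natCast_nonneg z
  set y := ⌊(N : ℝ) ^ η⌋₊ with hy
  have hyle : (y : ℝ) ≤ (N : ℝ) ^ η := Nat.floor_le (by positivity)
  have hy4 : 4 ≤ y := by rw [hy, Nat.le_floor_iff (by positivity)]; exact_mod_cast hN2
  have hygt : (N : ℝ) ^ η / 2 ≤ y := by
    have := Nat.lt_floor_add_one ((N : ℝ) ^ η)
    rw [← hy] at this
    linarith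
  have hlogNη : Real.log ((N : ℝ) ^ η) = η * L := Real.log_rpow hNp η
  have hly : η / 2 * L ≤ Real.log y := by
    have h1 : Real.log ((N : ℝ) ^ η / 2) ≤ Real.log y := Real.log_le_log (by positivity) hygt
    rw [Real.log_div (by positivity) (by norm_num), hlogNη] at h1
    have h2 : Real.log 4 ≤ η * L := by rw [← hlogNη]; exact Real.log_le_log (by norm_num) hN2
    have h4 : Real.log 4 = 2 * Real.log 2 := by
      rw [show (4 : ℝ) = 2 ^ 2 by norm_num, Real.log_pow]; norm_num
    linarith
  have hXmem : ∀ n ∈ X, b₀ + n * M ∈ A := by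
    intro n hn
    rw [hXdef] at hn
    exact (mem_filter.1 hn).2
  have hXP : X ⊆ range P := by
    intro n hn
    have h1 := (mem_Icc.1 (mem_filter.1 (hA (hXmem n hn))).1).2
    have h2 : n * M ≤ N := by omega
    have h3 : (n : ℝ) ≤ N / M := by rw [le_div_iff₀ hMr]; exact_mod_cast h2
    rw [mem_range]
    have : (n : ℝ) < P := by linarith
    exact_mod_cast this
  have hQ : (y ^ (12 * k + 1)) ^ 4 ≤ P := by
    have h1 : ((y : ℝ) ^ (12 * k + 1)) ^ 4 ≤ (N : ℝ) ^ ((1 : ℝ) / 2) := by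
      calc ((y : ℝ) ^ (12 * k + 1)) ^ 4 ≤ (((N : ℝ) ^ η) ^ (12 * k + 1)) ^ 4 := by gcongr
        _ = (N : ℝ) ^ (η * (12 * k + 1 : ℕ) * 4) := by
            rw [Real.rpow_mul hNp.le, Real.rpow_mul hNp.le, Real.rpow_natCast]
            norm_cast
        _ ≤ _ := by
            apply Real.rpow_le_rpow_of_exponent_le hNr
            rw [hη]
            have : (0 : ℝ) < 8 * (12 * k + 1 : ℕ) + (4 * k + 1) := by positivity
            field_simp
            linarith
    have h2 := h1.trans hPN
    exact_mod_cast h2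
  have hres : ∀ p : ℕ, p.Prime → z < p → p ≤ y → (X.image (· % p)).card + k ≤ p := by
    intro p hp hzp hpy
    apply residues a b p hp M b₀
    · rw [hM, dvd_primor_iff hp, ← hz]; omega
    · rw [← hD]
      intro h
      have := Nat.le_of_dvd (Int.natAbs_pos.2 hD0) (Int.natCast_dvd.1 h)
      omega
    · intro n hn h
      have h1 := (mem_filter.1 (hA (hXmem n hn))).2
      rw [← hF] at h
      have h2 : p ∣ primor ((N : ℝ) ^ ((1 : ℝ) / (4 * k + 1))) := by
        rw [dvd_primor_iff hp]
        refine hpy.trans ?_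
        apply Nat.floor_le_floor
        apply Real.rpow_le_rpow_of_exponent_le hNr
        rw [hη]
        apply one_div_le_one_div_of_le (by positivity)
        have : (0 : ℝ) ≤ 8 * (12 * k + 1 : ℕ) := by positivity
        linarith
      have h3 := Int.dvd_gcd h (Int.natCast_dvd_natCast.2 h2)
      rw [h1] at h3
      have h4 : p ∣ 1 := by exact_mod_cast h3
      exact hp.one_lt.ne' (Nat.dvd_one.1 h4)
  have hXpos : (0 : ℝ) < X.card := by
    refine lt_of_lt_of_le ?_ hX
    positivity
  set G : ℝ := 128 * (93 * k * Real.exp 8) ^ k with hG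
  have hG0 : 0 ≤ G := by positivity
  set K : ℝ := G * (2 / η) ^ k * (2 * cp / c₀) / δ with hK
  have hK0 : 0 ≤ K := by positivity
  have hKb : G * (Real.log z / Real.log y) ^ k * P ≤ K * X.card := by
    have e1 : Real.log z / Real.log y ≤ (2 / η) * (l / L) := by
      calc Real.log z / Real.log y ≤ l / (η / 2 * L) := by gcongr
        _ = _ := by field_simp
    have e2 : (l / L) ^ k * P ≤ 2 * cp / (c₀ * δ) * X.card := by
      calc (l / L) ^ k * P ≤ (l / L) ^ k * (2 * cp * N / M) := by gcongr
        _ = 2 * cp / (c₀ * δ) * (c₀ * δ * l ^ k / L ^ k * N / M) := by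
            rw [div_pow]; field_simp
        _ ≤ _ := by gcongr
    calc G * (Real.log z / Real.log y) ^ k * P ≤ G * ((2 / η) * (l / L)) ^ k * P := by
          have : 0 ≤ Real.log z / Real.log y := div_nonneg hlz0 (Real.log_natCast_nonneg y)
          gcongr
      _ = G * (2 / η) ^ k * ((l / L) ^ k * P) := by rw [mul_pow]; ring
      _ ≤ G * (2 / η) ^ k * (2 * cp / (c₀ * δ) * X.card) := by gcongr
      _ = K * X.card := by rw [hK]; field_simp
  refine moment _ (fun t => norm_nonneg _) K hK0 univ ?_
  intro T' _ hne
  have hvi : Function.Injective (ZMod.val : ZMod P → ℕ) := ZMod.val_injective P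
  have hls := level_set hk hPpos (by omega : 2 ≤ y) le_rfl (by omega : 2 * k ≤ z) hQ X hXP hres
    (T'.image ZMod.val) (by
      intro n hn
      obtain ⟨t, _, rfl⟩ := mem_image.1 hn
      exact mem_range.2 (ZMod.val_lt t)) (hne.image _)
  rw [sum_image hvi.injOn, card_image_of_injective _ hvi] at hls
  simp only [FTP_image X hXP, div_pow]
  rw [← sum_div, div_le_iff₀ (by positivity)]
  refine hls.trans ?_
  calc _ = (G * (Real.log z / Real.log y) ^ k * P) * (X.card * (T'.card : ℝ) ^ ((1 : ℝ) / 10)) := by ring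
    _ ≤ (K * X.card) * (X.card * (T'.card : ℝ) ^ ((1 : ℝ) / 10)) := by gcongr
    _ = _ := by ring


end PartH

theorem stmt5
    (k : ℕ) (hk : 1 ≤ k) (a b : Fin k → ℤ) (ha : ∀ i, a i ≠ 0)
    (F : ℤ → ℤ) (hF : ∀ n : ℤ, F n = ∏ i, (a i * n + b i))
    (hdisc : (∏ i, a i) *
      ∏ i, ∏ j ∈ Finset.univ.filter (fun j => j ≠ i), (a i * b j - b i * a j) ≠ 0)
    (hadm : ∀ p : ℕ, p.Prime → ∃ n : ℤ, ¬ ((p : ℤ) ∣ F n))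
    (cc : Fin 3 → ℤ) (hcc : ∀ i, cc i ≠ 0) (hti : ∑ i, cc i = 0)
    (c₀ : ℝ) (hc₀ : 0 < c₀) :
    ∃ (C : ℝ) (N₁ : ℕ), 0 < C ∧
      ∀ N : ℕ, N₁ ≤ N →
      ∀ A : Finset ℕ, A ⊆ SFset F N ((N : ℝ) ^ ((1 : ℝ) / (4 * k + 1))) →
      ∀ δ : ℝ, 0 < δ →
        (A.card : ℝ) = δ * ((SFset F N ((N : ℝ) ^ ((1 : ℝ) / (4 * k + 1)))).card : ℝ) →
      ∀ b₀ : ℕ, b₀ < primor (Real.log N / 3) →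
        Int.gcd (F b₀) (primor (Real.log N / 3)) = 1 →
        c₀ * δ * (Real.log (Real.log N)) ^ k / (Real.log N) ^ k *
            (N : ℝ) / (primor (Real.log N / 3) : ℝ)
          ≤ ((Abset A N (primor (Real.log N / 3)) b₀).card : ℝ) →
      ∀ (P : ℕ) [Fact P.Prime],
        ((∑ i ∈ Finset.univ.filter (fun i => 0 < cc i), cc i : ℤ) : ℝ) *
            (N : ℝ) / (primor (Real.log N / 3) : ℝ) ≤ (P : ℝ) →
        (P : ℝ) ≤ 2 * ((∑ i ∈ Finset.univ.filter (fun i => 0 < cc i), cc i : ℤ) : ℝ) *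
            (N : ℝ) / (primor (Real.log N / 3) : ℝ) →
        ∀ ε₁ ε₂ : ℝ, 0 < ε₁ → 0 < ε₂ →
        ∀ B : Finset (ZMod P),
          (∀ t ∈ (Finset.univ : Finset (Fin 3)).biUnion (fun i =>
              (Finset.univ.filter (fun t : ZMod P =>
                ε₁ < ‖FTP (fCfun ((Abset A N (primor (Real.log N / 3)) b₀).image
                  (fun n : ℕ => (n : ZMod P)))) t‖)).image
                (fun t => ((cc i : ZMod P) * ((cc 0 : ZMod P))⁻¹) * t)),
            ‖FTP (fCfun B) t - 1‖ ≤ ε₂) →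
          |LamL cc (fCfun ((Abset A N (primor (Real.log N / 3)) b₀).image
                (fun n : ℕ => (n : ZMod P)))) -
              LamL cc (convP (fCfun ((Abset A N (primor (Real.log N / 3)) b₀).image
                (fun n : ℕ => (n : ZMod P)))) (fCfun B))|
            ≤ C * (ε₂ + ε₁ ^ ((1 : ℝ) / 2)) / δ ^ 6 * (P : ℝ) ^ 2 := by
  classical
  obtain ⟨D, hD⟩ : ∃ D : ℤ, D = (∏ i, a i) *
      ∏ i, ∏ j ∈ Finset.univ.filter (fun j => j ≠ i), (a i * b j - b i * a j) := ⟨_, rfl⟩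
  have hD0 : D ≠ 0 := by rw [hD]; exact hdisc
  obtain ⟨η, hη⟩ : ∃ η : ℝ, η = 1 / (8 * (12 * k + 1 : ℕ) + (4 * k + 1)) := ⟨_, rfl⟩
  have hη0 : 0 < η := by rw [hη]; positivity
  have hcpZ := cpos_ge cc hcc hti
  obtain ⟨cpz, hcpz⟩ : ∃ c : ℤ, c = ∑ i ∈ Finset.univ.filter (fun i => 0 < cc i), cc i := ⟨_, rfl⟩
  rw [← hcpz] at hcpZ ⊢
  have hcp : (2 : ℝ) ≤ (cpz : ℝ) := by exact_mod_cast hcpZ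
  obtain ⟨E, hE⟩ : ∃ E : ℝ, E = 128 * (93 * k * Real.exp 8) ^ k * (2 / η) ^ k * (2 * cpz / c₀) := ⟨_, rfl⟩
  have hkr : (1 : ℝ) ≤ k := by exact_mod_cast hk
  have hE0 : 0 < E := by rw [hE]; positivity
  have hcast : Filter.Tendsto (fun N : ℕ => (N : ℝ)) Filter.atTop Filter.atTop :=
    tendsto_natCast_atTop_atTop
  have ev1 : ∀ᶠ N : ℕ in Filter.atTop, 3 * (2 * k + D.natAbs + 2 : ℝ) ≤ Real.log N :=
    (Real.tendsto_log_atTop.comp hcast).eventually_ge_atTop _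
  have ev2 : ∀ᶠ N : ℕ in Filter.atTop, (4 : ℝ) ≤ (N : ℝ) ^ η :=
    ((tendsto_rpow_atTop hη0).comp hcast).eventually_ge_atTop _
  have ev3 : ∀ᶠ N : ℕ in Filter.atTop, ((∑ i, (cc i).natAbs : ℕ) : ℝ) + 1 ≤ (N : ℝ) ^ ((1 : ℝ) / 2) :=
    ((tendsto_rpow_atTop (by norm_num : (0 : ℝ) < 1 / 2)).comp hcast).eventually_ge_atTop _
  obtain ⟨N₁, hN₁⟩ := Filter.eventually_atTop.1 (ev1.and (ev2.and ev3))
  refine ⟨81 * E ^ ((5 : ℝ) / 4), N₁, by positivity, ?_⟩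
  intro N hN A hA δ hδ hAcard b₀ hb₀ hgcd hXlow P hPf hP1 hP2 ε₁ ε₂ hε₁ hε₂ B hB
  obtain ⟨h1, h2, h3⟩ := hN₁ N hN
  have hmom := core_bound k hk a b F hF D hD hD0 c₀ hc₀ η hη N (by linarith) h2 A hA δ hδ b₀
    (primor (Real.log N / 3)) rfl (Abset A N (primor (Real.log N / 3)) b₀) rfl hXlow P cpz hcp hP1 hP2
  rw [← hE] at hmom
  have hL : 12 ≤ Real.log N := by
    have : (0 : ℝ) ≤ (D.natAbs : ℝ) := by positivity
    linarith
  have hN0 : 1 ≤ N := by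
    rcases Nat.eq_zero_or_pos N with h | h
    · subst h; simp at hL; linarith
    · exact h
  have hNp : (0 : ℝ) < N := by exact_mod_cast hN0
  have hMr : (0 : ℝ) < primor (Real.log N / 3) := by exact_mod_cast primor_pos _
  -- `δ ≤ 1`
  have hδ1 : δ ≤ 1 := by
    have hle : (A.card : ℝ) ≤ (SFset F N ((N : ℝ) ^ ((1 : ℝ) / (4 * k + 1)))).card := by
      exact_mod_cast Finset.card_le_card hA
    have hXpos : (0 : ℝ) < (Abset A N (primor (Real.log N / 3)) b₀).card := by
      refine lt_of_lt_of_le ?_ hXlow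
      have : 0 < Real.log (Real.log N) := Real.log_pos (by linarith)
      positivity
    have hne : (Abset A N (primor (Real.log N / 3)) b₀).Nonempty := by
      rw [← Finset.card_pos]; exact_mod_cast hXpos
    obtain ⟨n, hn⟩ := hne
    have hAne : 0 < A.card := Finset.card_pos.2 ⟨_, (Finset.mem_filter.1 hn).2⟩
    have hAr : (0 : ℝ) < A.card := by exact_mod_cast hAne
    by_contra hcon
    have hcon := not_le.1 hcon
    rw [hAcard] at hle
    nlinarith
  -- the coefficients are invertible modulo `P`
  have hPN : (N : ℝ) ^ ((1 : ℝ) / 2) ≤ P := by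
    have hMle := primor_le hN0
    refine le_trans ?_ hP1
    rw [le_div_iff₀ hMr]
    calc (N : ℝ) ^ ((1 : ℝ) / 2) * primor (Real.log N / 3)
        ≤ (N : ℝ) ^ ((1 : ℝ) / 2) * (N : ℝ) ^ ((1 : ℝ) / 2) := by gcongr
      _ = N := by rw [← Real.rpow_add hNp]; norm_num
      _ ≤ cpz * N := by nlinarith
  have hc : ∀ i, (cc i : ZMod P) ≠ 0 := by
    intro i h
    rw [ZMod.intCast_zmod_eq_zero_iff_dvd] at h
    have h4 := Nat.le_of_dvd (Int.natAbs_pos.2 (hcc i)) (Int.natCast_dvd.1 h)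
    have h5 : (cc i).natAbs ≤ ∑ i, (cc i).natAbs :=
      Finset.single_le_sum (f := fun i => (cc i).natAbs) (fun _ _ => Nat.zero_le _) (Finset.mem_univ i)
    have h6 : (P : ℝ) ≤ ((∑ i, (cc i).natAbs : ℕ) : ℝ) := by exact_mod_cast h4.trans h5
    linarith
  have hdiff := diff_bound cc hc ((Abset A N (primor (Real.log N / 3)) b₀).image
    (fun n : ℕ => (n : ZMod P))) B hε₁ hε₂ (by
      intro t ht i
      apply hB
      refine Finset.mem_biUnion.2 ⟨i, Finset.mem_univ i, Finset.mem_image.2 ⟨t, ?_, rfl⟩⟩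
      exact Finset.mem_filter.2 ⟨Finset.mem_univ t, ht⟩)
  refine hdiff.trans ?_
  have hpow : (E / δ) ^ ((5 : ℝ) / 4) ≤ E ^ ((5 : ℝ) / 4) / δ ^ 6 := by
    rw [Real.div_rpow hE0.le hδ.le]
    have h7 : δ ^ 6 ≤ δ ^ ((5 : ℝ) / 4) := by
      rw [← Real.rpow_natCast]
      exact Real.rpow_le_rpow_of_exponent_ge hδ hδ1 (by norm_num)
    gcongr
  have hss : 0 ≤ ε₂ + ε₁ ^ ((1 : ℝ) / 2) := by positivity
  calc _ ≤ 9 * (ε₂ + ε₁ ^ ((1 : ℝ) / 2)) * (P : ℝ) ^ 2 * (9 * (E ^ ((5 : ℝ) / 4) / δ ^ 6)) := by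
        gcongr
        exact hmom.trans (by gcongr)
    _ = _ := by ring
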